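/- arXiv:2103.05195 — 2 statements merged into one kernel-verified Lean document; each statement's English description precedes it below -/
import Mathlib

section
/- For every permutation w ∈ S_n, S_w(1,1,…,1) ≥ n₁₃₂(w) + 1, where S_w is the Schubert polynomial of w evaluated at all variables equal to 1 and n₁₃₂(w) is the number of 132-patterns in w. -/
namespace Schub

open MvPolynomial

/-- The number of `132`-patterns of `w ∈ S_n`. -/
def n132 (n : ℕ) (w : Equiv.Perm (Fin n)) : ℕ :=
  (Finset.univ.filter fun t : Fin n × Fin n × Fin n =>
    t.1 < t.2.1 ∧ t.2.1 < t.2.2 ∧ w t.1 < w t.2.2 ∧ w t.2.2 < w t.2.1).card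

def cov {n : ℕ} (v : Fin n → Fin n) (a b : Fin n) : Prop :=
  a < b ∧ v a < v b ∧ ∀ p, a < p → p < b → ¬ (v a < v p ∧ v p < v b)

theorem exists_ascent {n : ℕ} (w : Equiv.Perm (Fin n)) (hw : w ≠ Fin.revPerm) :
    ∃ k k' : Fin n, (k' : ℕ) = k + 1 ∧ w k < w k' := by
  by_contra! hcon
  apply hw
  cases n with
  | zero => exact Subsingleton.elim _ _
  | succ m =>
    have hanti : StrictAnti w := by
      rw [Fin.strictAnti_iff_succ_lt]
      intro i
      refine lt_of_le_of_ne (hcon i.castSucc i.succ (by simp)) ?_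
      intro h
      have := congrArg Fin.val (w.injective h)
      simp at this
    have hm : StrictMono (fun i => w (Fin.rev i)) := fun a b hab =>
      hanti (Fin.rev_lt_rev.2 hab)
    have hs : Function.Surjective (fun i => w (Fin.rev i)) :=
      w.surjective.comp Fin.rev_surjective
    have := Subsingleton.elim (hm.orderIsoOfSurjective _ hs) (OrderIso.refl _)
    ext1 i
    have h2 := DFunLike.congr_fun this (Fin.rev i)
    simpa using h2

/-- A measure which drops when going up. -/
def wt {n : ℕ} (w : Equiv.Perm (Fin n)) : ℕ := ∑ i : Fin n, (i : ℕ) * (w i : ℕ)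

theorem wt_lt {n : ℕ} (w : Equiv.Perm (Fin n)) {a b : Fin n} (hab : a < b) (h : w a < w b) :
    wt (w * Equiv.swap a b) < wt w := by
  have : ((wt w : ℕ) : ℤ) - wt (w * Equiv.swap a b) =
      ((b : ℤ) - a) * ((w b : ℤ) - w a) := by
    unfold wt
    push_cast
    rw [← Finset.sum_sub_distrib, Fintype.sum_eq_add a b hab.ne]
    · simp; ring
    · rintro x ⟨h1, h2⟩
      simp [Equiv.swap_apply_of_ne_of_ne h1 h2]
  have h1 : (0 : ℤ) < (b : ℤ) - a := by have := Fin.lt_def.1 hab; omega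
  have h2 : (0 : ℤ) < (w b : ℤ) - w a := by have := Fin.lt_def.1 h; omega
  have := mul_pos h1 h2
  omega

/-- Number of inversions. -/
def invs {n : ℕ} (w : Equiv.Perm (Fin n)) : ℕ :=
  (Finset.univ.filter fun t : Fin n × Fin n => t.1 < t.2 ∧ w t.2 < w t.1).card

theorem invs_pos {n : ℕ} (w : Equiv.Perm (Fin n)) {a b : Fin n} (hab : a < b) (h : w b < w a) :
    0 < invs w :=
  Finset.card_pos.2 ⟨(a, b), by simp [hab, h]⟩

theorem invs_swap {n : ℕ} (w : Equiv.Perm (Fin n)) {k k' : Fin n} (hk : (k' : ℕ) = k + 1)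
    (h : w k < w k') : invs (w * Equiv.swap k k') = invs w + 1 := by
  unfold invs
  rw [← Finset.card_map ((Equiv.prodCongr (Equiv.swap k k') (Equiv.swap k k')).toEmbedding)
      (s := Finset.univ.filter fun t : Fin n × Fin n => t.1 < t.2 ∧ w t.2 < w t.1),
    ← Finset.card_insert_of_notMem (a := (k, k'))]
  · congr 1
    ext ⟨a, b⟩
    simp only [Finset.mem_filter, Finset.mem_univ, true_and, Finset.mem_insert,
      Finset.mem_map_equiv, Equiv.prodCongr_symm, Equiv.symm_swap, Equiv.prodCongr_apply,
      Prod.map, Prod.mk.injEq, Equiv.Perm.mul_apply, Equiv.swap_apply_def]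
    grind
  · simp only [Finset.mem_filter, Finset.mem_univ, true_and, 
      Finset.mem_map_equiv, Equiv.prodCongr_symm, Equiv.symm_swap, Equiv.prodCongr_apply,
      Prod.map, Equiv.swap_apply_left, Equiv.swap_apply_right]
    rintro ⟨h1, -⟩
    have := Fin.lt_def.1 h1
    omega

theorem invs_rev (n : ℕ) : invs (Fin.revPerm : Equiv.Perm (Fin n)) = ∑ i : Fin n, (n - 1 - (i : ℕ)) := by
  unfold invs
  rw [Finset.card_filter, ← Finset.univ_product_univ, Finset.sum_product]
  refine Finset.sum_congr rfl fun i _ => ?_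
  simp only [Fin.revPerm_apply, Fin.rev_lt_rev, and_self]
  rw [← Finset.card_filter, ← Fin.card_Ioi]
  congr 1
  ext; simp

theorem n132_step {n : ℕ} (w : Equiv.Perm (Fin n)) {r t : Fin n} (hrt : r < t) (hw : w r < w t)
    (hgap : ∀ p, ¬ (w r < w p ∧ w p < w t)) :
    n132 n w ≤ n132 n (w * Equiv.swap r t) +
      (Finset.univ.filter fun j => r < j ∧ j < t ∧ w r < w j).card := by
  unfold n132
  rw [← Finset.card_image_of_injective (Finset.univ.filter fun j => r < j ∧ j < t ∧ w r < w j)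
    (f := fun j : Fin n => (r, j, t)) (fun a b h => by simpa using h)]
  refine (Finset.card_le_card ?_).trans (Finset.card_union_le _ _)
  rintro ⟨i, j, k⟩
  simp only [Finset.mem_filter, Finset.mem_univ, true_and, Finset.mem_union, Finset.mem_image,
    Prod.mk.injEq]
  rintro ⟨h1, h2, h3, h4⟩
  by_cases hc : i = r ∧ k = t
  · right
    exact ⟨j, by grind, hc.1.symm, rfl, hc.2.symm⟩
  · left
    have hi := hgap i
    have hj := hgap j
    have hk := hgap k
    have e : ∀ x y, w x = w y ↔ x = y := fun x y => w.injective.eq_iff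
    simp only [Equiv.Perm.mul_apply, Equiv.swap_apply_def]
    grind

theorem n132_first {n : ℕ} (w : Equiv.Perm (Fin n)) {r s t : Fin n} (hst : s < t) (hrs : r < s)
    (hs : ∀ p, r < p → p < s → ¬ w r < w p) (hw : w r < w t)
    (hgap : ∀ p, ¬ (w r < w p ∧ w p < w t)) :
    (Finset.univ.filter fun j => r < j ∧ j < t ∧ w r < w j).card ≤
      n132 n (w * Equiv.swap r s) + 1 := by
  unfold n132
  rw [← Finset.card_image_of_injective (Finset.univ.filter fun j => r < j ∧ j < t ∧ w r < w j)
    (f := fun j : Fin n => (s, j, t)) (fun a b h => by simpa using h)]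
  refine le_trans (Finset.card_le_card ?_) (Finset.card_insert_le (s, s, t) _)
  rintro ⟨i, j, k⟩
  simp only [Finset.mem_filter, Finset.mem_univ, true_and, Finset.mem_insert, Finset.mem_image,
    Prod.mk.injEq]
  rintro ⟨j', ⟨h1, h2, h3⟩, rfl, rfl, rfl⟩
  have hg := hgap j'
  have hj := hs j'
  have : w j' = w t ↔ j' = t := w.injective.eq_iff
  simp only [Equiv.Perm.mul_apply, Equiv.swap_apply_def]
  grind
theorem sw_mono {n : ℕ} {k k' a b : Fin n} (hk : (k' : ℕ) = k + 1) (hab : a < b)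
    (hne : ¬ (a = k ∧ b = k')) : Equiv.swap k k' a < Equiv.swap k k' b := by
  simp only [Equiv.swap_apply_def]
  grind

theorem cov_asc {n : ℕ} (v : Equiv.Perm (Fin n)) {k k' a b : Fin n} (hk : (k' : ℕ) = k + 1)
    (hne : ¬ (a = k ∧ b = k')) (hv : v k < v k') (h : cov v a b) :
    (v * Equiv.swap a b) k < (v * Equiv.swap a b) k' := by
  obtain ⟨h1, h2, h3⟩ := h
  have hp := h3 k
  have hp' := h3 k'
  have := v.injective.eq_iff (a := k) (b := a)
  have := v.injective.eq_iff (a := k) (b := b)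
  have := v.injective.eq_iff (a := k') (b := a)
  have := v.injective.eq_iff (a := k') (b := b)
  simp only [Equiv.Perm.mul_apply, Equiv.swap_apply_def]
  split_ifs <;> grind

theorem cov_desc {n : ℕ} (v : Equiv.Perm (Fin n)) {k k' a b : Fin n} (hk : (k' : ℕ) = k + 1)
    (hne : ¬ (a = k ∧ b = k')) (hne' : ¬ (b = k ∧ a = k')) (hv : v k' < v k) :
    (cov v a b ∧ (v * Equiv.swap a b) k' < (v * Equiv.swap a b) k) ↔
      cov (v * Equiv.swap k k' : Equiv.Perm (Fin n)) (Equiv.swap k k' a) (Equiv.swap k k' b) := by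
  have hss : ∀ x, Equiv.swap k k' (Equiv.swap k k' x) = x := fun x => Equiv.swap_apply_self ..
  by_cases hab : a < b
  swap
  · have : ¬ (Equiv.swap k k' a < Equiv.swap k k' b) := by
      intro h
      have := sw_mono hk h (by
        intro ⟨h1, h2⟩
        apply hne'
        rw [Equiv.swap_apply_eq_iff] at h1 h2
        simp at h1 h2
        exact ⟨h2, h1⟩)
      rw [hss, hss] at this
      exact hab this
    simp [cov, hab, this]
  have hs := sw_mono hk hab hne
  simp only [cov, hab, hs, true_and, Equiv.Perm.mul_apply, hss]
  constructor
  · rintro ⟨⟨h1, h2⟩, h3⟩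
    refine ⟨h1, fun p hp1 hp2 => ?_⟩
    have := h2 (Equiv.swap k k' p)
    simp only [Equiv.swap_apply_def] at *
    grind
  · rintro ⟨h1, h2⟩
    refine ⟨⟨h1, fun p hp1 hp2 => ?_⟩, ?_⟩
    · have := h2 (Equiv.swap k k' p)
      simp only [Equiv.swap_apply_def] at *
      grind
    · have h3 := h2 k
      have h4 := h2 k'
      have := v.injective.eq_iff (a := k) (b := a)
      have := v.injective.eq_iff (a := k) (b := b)
      have := v.injective.eq_iff (a := k') (b := a)
      have := v.injective.eq_iff (a := k') (b := b)
      simp only [Equiv.swap_apply_def] at *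
      grind

/-- The divided difference recurrence. -/
def Rec {n : ℕ} (S : Equiv.Perm (Fin n) → MvPolynomial (Fin n) ℚ) : Prop :=
  ∀ (w : Equiv.Perm (Fin n)) (k k' : Fin n), (k' : ℕ) = k + 1 → w k < w k' →
    (X k - X k') * S w = S (w * Equiv.swap k k') -
      rename (Equiv.swap k k') (S (w * Equiv.swap k k'))

theorem X_sub_ne {n : ℕ} {k k' : Fin n} (hk : (k' : ℕ) = k + 1) :
    (X k - X k' : MvPolynomial (Fin n) ℚ) ≠ 0 := by
  rw [sub_ne_zero]
  intro h
  have := X_injective h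
  subst this
  omega

/-- downward induction from the longest element -/
theorem down_induction {n : ℕ} {P : Equiv.Perm (Fin n) → Prop} (h0 : P Fin.revPerm)
    (h1 : ∀ w (k k' : Fin n), (k' : ℕ) = k + 1 → w k < w k' → P (w * Equiv.swap k k') → P w)
    (w : Equiv.Perm (Fin n)) : P w := by
  induction hN : wt w using Nat.strong_induction_on generalizing w with
  | _ N ih =>
    subst hN
    by_cases hw : w = Fin.revPerm
    · rw [hw]; exact h0
    · obtain ⟨k, k', hk, h⟩ := exists_ascent w hw
      exact h1 w k k' hk h (ih _ (wt_lt w (Fin.lt_def.2 (by omega)) h) _ rfl)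

/-- scaling by two -/
noncomputable def scl (n : ℕ) : MvPolynomial (Fin n) ℚ →ₐ[ℚ] MvPolynomial (Fin n) ℚ :=
  aeval (fun i => 2 * X i)

theorem scl_rename {n : ℕ} (e : Fin n → Fin n) (p : MvPolynomial (Fin n) ℚ) :
    scl n (rename e p) = rename e (scl n p) := by
  have : (scl n).comp (rename e) = (rename e).comp (scl n) := by
    apply MvPolynomial.algHom_ext
    intro i
    simp [scl, map_ofNat (rename e) 2]
  exact DFunLike.congr_fun this p

theorem pow_two_aux {n N : ℕ} {a b : MvPolynomial (Fin n) ℚ} {e : Fin n → Fin n} :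
    2 ^ N * (a - b) = 2 ^ N * a - rename e (2 ^ N) * b := by
  rw [map_pow, map_ofNat, mul_sub]

theorem scl_S {n : ℕ} {S : Equiv.Perm (Fin n) → MvPolynomial (Fin n) ℚ} (hS : Rec S)
    (hlong : S Fin.revPerm = ∏ i : Fin n, X i ^ (n - 1 - (i : ℕ))) (w : Equiv.Perm (Fin n)) :
    scl n (S w) = 2 ^ invs w * S w := by
  induction w using down_induction with
  | h0 =>
    rw [hlong, invs_rev, map_prod, ← Finset.prod_pow_eq_pow_sum, ← Finset.prod_mul_distrib]
    refine Finset.prod_congr rfl fun i _ => ?_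
    simp [scl, mul_pow]
  | h1 w k k' hk h ih =>
    have h1 := hS w k k' hk h
    have h2 := congrArg (scl n) h1
    rw [map_mul, map_sub, map_sub, scl_rename, ih, map_mul, ← pow_two_aux, ← h1,
      invs_swap w hk h] at h2
    apply mul_left_cancel₀ (X_sub_ne hk)
    have h3 : (2 : MvPolynomial (Fin n) ℚ) ≠ 0 := two_ne_zero
    apply mul_left_cancel₀ h3
    have h4 : scl n (X k) = 2 * X k := by simp [scl]
    have h5 : scl n (X k') = 2 * X k' := by simp [scl]
    rw [h4, h5] at h2
    linear_combination h2

theorem eval_zero_S {n : ℕ} {S : Equiv.Perm (Fin n) → MvPolynomial (Fin n) ℚ} (hS : Rec S)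
    (hlong : S Fin.revPerm = ∏ i : Fin n, X i ^ (n - 1 - (i : ℕ))) (w : Equiv.Perm (Fin n))
    (hw : 0 < invs w) : eval (fun _ => (0 : ℚ)) (S w) = 0 := by
  have h := congrArg (eval (fun _ => (0 : ℚ))) (scl_S hS hlong w)
  have h2 : ∀ p, eval (fun _ => (0 : ℚ)) (scl n p) = eval (fun _ => (0 : ℚ)) p := by
    intro p
    have : ((aeval (fun _ => (0 : ℚ))).comp (scl n) : MvPolynomial (Fin n) ℚ →ₐ[ℚ] ℚ)
        = aeval (fun _ => (0 : ℚ)) := by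
      apply MvPolynomial.algHom_ext
      intro i
      simp [scl]
    have := DFunLike.congr_fun this p
    simpa [aeval_eq_eval] using this
  rw [h2] at h
  have h3 : (2 : ℚ) ^ invs w ≠ 1 := by
    have : (1 : ℚ) < 2 ^ invs w := one_lt_pow₀ (by norm_num) hw.ne'
    exact this.ne'
  simp only [map_mul, map_pow, map_ofNat] at h
  have : ((2 : ℚ) ^ invs w - 1) * eval (fun _ => (0 : ℚ)) (S w) = 0 := by linear_combination -h
  rcases mul_eq_zero.1 this with h | h
  · exact absurd (sub_eq_zero.1 h) h3
  · exact h

theorem degreeOf_S {n : ℕ} {S : Equiv.Perm (Fin n) → MvPolynomial (Fin n) ℚ} (hS : Rec S)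
    (hlong : S Fin.revPerm = ∏ i : Fin n, X i ^ (n - 1 - (i : ℕ))) (w : Equiv.Perm (Fin n)) :
    ∀ i : Fin n, degreeOf i (S w) ≤ n - 1 - (i : ℕ) := by
  induction w using down_induction with
  | h0 =>
    intro i
    rw [hlong]
    refine (degreeOf_prod_le _ _ _).trans ?_
    rw [Finset.sum_eq_single i]
    · refine (degreeOf_pow_le _ _ _).trans ?_
      simp
    · intro j _ hj
      have := degreeOf_pow_le i (X j : MvPolynomial (Fin n) ℚ) (n - 1 - (j : ℕ))
      rw [degreeOf_X_of_ne hj.symm] at this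
      simpa using this
    · simp
  | h1 w k k' hk h ih =>
    intro i
    by_cases h0 : S w = 0
    · simp [h0]
    have h1 := congrArg (degreeOf i) (hS w k k' hk h)
    rw [degreeOf_mul_eq (X_sub_ne hk) h0] at h1
    have h2 := degreeOf_sub_le i (S (w * Equiv.swap k k'))
      (rename (Equiv.swap k k') (S (w * Equiv.swap k k')))
    have h3 := degreeOf_rename_of_injective (p := S (w * Equiv.swap k k'))
      (Equiv.swap k k').injective (Equiv.swap k k' i)
    rw [Equiv.swap_apply_self] at h3
    rw [h3] at h2
    have h4 := ih i
    have h5 := ih (Equiv.swap k k' i)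
    have hkk : k ≠ k' := by rintro rfl; omega
    have h6 : i = k ∨ i = k' → 1 ≤ degreeOf i (X k - X k' : MvPolynomial (Fin n) ℚ) := by
      intro hi
      by_contra! hcon
      have hz : degreeOf i (X k - X k' : MvPolynomial (Fin n) ℚ) = 0 := by omega
      rcases hi with rfl | rfl
      · have := degreeOf_add_le i (X i - X k' : MvPolynomial (Fin n) ℚ) (X k')
        rw [sub_add_cancel, hz, degreeOf_X_of_ne hkk, degreeOf_X] at this
        simp at this
      · have := degreeOf_sub_le i (X k : MvPolynomial (Fin n) ℚ) (X k - X i)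
        rw [sub_sub_cancel, hz, degreeOf_X_of_ne hkk.symm, degreeOf_X] at this
        simp at this
    have hkn := k'.isLt
    by_cases hik : i = k
    · subst hik
      rw [Equiv.swap_apply_left] at *
      have := h6 (Or.inl rfl)
      omega
    by_cases hik' : i = k'
    · subst hik'
      rw [Equiv.swap_apply_right] at *
      have := h6 (Or.inr rfl)
      omega
    rw [Equiv.swap_apply_of_ne_of_ne hik hik'] at *
    omega

theorem cov_adj {n : ℕ} (v : Fin n → Fin n) {k k' : Fin n} (hk : (k' : ℕ) = k + 1) :
    cov v k k' ↔ v k < v k' := by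
  unfold cov
  constructor
  · exact fun h => h.2.1
  · intro h
    refine ⟨Fin.lt_def.2 (by omega), h, fun p h1 h2 => ?_⟩
    have := Fin.lt_def.1 h1
    have := Fin.lt_def.1 h2
    omega

theorem not_cov {n : ℕ} (v : Fin n → Fin n) {a b : Fin n} (h : b ≤ a) : ¬ cov v a b :=
  fun hc => absurd hc.1 (not_lt.2 h)

open Classical in
/-- Signed Monk coefficients. -/
noncomputable def cf {n : ℕ} (v : Equiv.Perm (Fin n)) (r j : Fin n) : ℚ :=
  (if cov v r j then 1 else 0) - (if cov v j r then 1 else 0)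

theorem cf_asc {n : ℕ} (v : Equiv.Perm (Fin n)) {k k' r j : Fin n} (hk : (k' : ℕ) = k + 1)
    (hj : j ≠ Equiv.swap k k' r) (hv : v k < v k')
    (hd : (v * Equiv.swap r j) k' < (v * Equiv.swap r j) k) : cf v r j = 0 := by
  have hne : ¬ (r = k ∧ j = k') := by rintro ⟨rfl, rfl⟩; simp at hj
  have hne' : ¬ (j = k ∧ r = k') := by rintro ⟨rfl, rfl⟩; simp at hj
  have h1 : ¬ cov v r j := fun h => absurd (cov_asc v hk hne hv h) hd.not_gt
  have h2 : ¬ cov v j r := fun h => by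
    have := cov_asc v hk hne' hv h
    rw [Equiv.swap_comm] at this
    exact absurd this hd.not_gt
  simp [cf, h1, h2]

theorem cf_desc {n : ℕ} (v : Equiv.Perm (Fin n)) {k k' r j : Fin n} (hk : (k' : ℕ) = k + 1)
    (hj : j ≠ Equiv.swap k k' r) (hv : v k' < v k) :
    cf (v * Equiv.swap k k') (Equiv.swap k k' r) (Equiv.swap k k' j) =
      if (v * Equiv.swap r j) k' < (v * Equiv.swap r j) k then cf v r j else 0 := by
  have hne : ¬ (r = k ∧ j = k') := by rintro ⟨rfl, rfl⟩; simp at hj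
  have hne' : ¬ (j = k ∧ r = k') := by rintro ⟨rfl, rfl⟩; simp at hj
  have h1 := cov_desc v hk hne hne' hv
  have h2 := cov_desc v hk hne' hne hv
  rw [Equiv.swap_comm j r] at h2
  unfold cf
  by_cases hd : (v * Equiv.swap r j) k' < (v * Equiv.swap r j) k
  · rw [if_pos hd]
    have h1' := h1.symm.trans (and_iff_left hd)
    have h2' := h2.symm.trans (and_iff_left hd)
    by_cases c1 : cov v r j <;> by_cases c2 : cov v j r <;>
      simp only [c1, c2, iff_true, iff_false] at h1' h2' <;> simp only [c1, c2, h1', h2']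
  · rw [if_neg hd, if_neg (fun h => hd (h1.2 h).2), if_neg (fun h => hd (h2.2 h).2), sub_zero]

/-- divided difference on Schubert polynomials -/
noncomputable def DD {n : ℕ} (S : Equiv.Perm (Fin n) → MvPolynomial (Fin n) ℚ) (k k' : Fin n)
    (u : Equiv.Perm (Fin n)) : MvPolynomial (Fin n) ℚ :=
  if u k' < u k then S (u * Equiv.swap k k') else 0

theorem rename_swap_swap {n : ℕ} (k k' : Fin n) (p : MvPolynomial (Fin n) ℚ) :
    rename (Equiv.swap k k') (rename (Equiv.swap k k') p) = p := by
  rw [rename_rename]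
  have : (Equiv.swap k k' : Fin n → Fin n) ∘ (Equiv.swap k k') = id := by
    ext x; simp
  rw [this, rename_id]; rfl

theorem sub_rename_S {n : ℕ} {S : Equiv.Perm (Fin n) → MvPolynomial (Fin n) ℚ} (hS : Rec S)
    {k k' : Fin n} (hk : (k' : ℕ) = k + 1) (u : Equiv.Perm (Fin n)) :
    S u - rename (Equiv.swap k k') (S u) = (X k - X k') * DD S k k' u := by
  have hkk : k ≠ k' := by rintro rfl; omega
  unfold DD
  split_ifs with h
  · have := hS (u * Equiv.swap k k') k k' hk (by simpa using h)
    rw [Equiv.mul_swap_mul_self] at this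
    exact this.symm
  · have h' : u k < u k' := lt_of_le_of_ne (not_lt.1 h) (fun e => hkk (u.injective e))
    have h1 := hS u k k' hk h'
    have h2 := congrArg (rename (Equiv.swap k k')) h1
    rw [map_sub, rename_swap_swap, map_mul, map_sub, rename_X, rename_X, Equiv.swap_apply_left,
      Equiv.swap_apply_right] at h2
    rw [mul_zero]
    apply mul_left_cancel₀ (X_sub_ne hk)
    linear_combination h1 + h2

theorem swap_conj {n : ℕ} (v : Equiv.Perm (Fin n)) (k k' r j : Fin n) :
    v * Equiv.swap k k' * Equiv.swap (Equiv.swap k k' r) (Equiv.swap k k' j) =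
      v * Equiv.swap r j * Equiv.swap k k' := by
  rw [mul_assoc, Equiv.mul_swap_eq_swap_mul]
  simp [mul_assoc]

/-- sign -/
def sg {n : ℕ} (k k' r : Fin n) : ℚ := if r = k then 1 else if r = k' then -1 else 0

theorem X_sub_sg {n : ℕ} (k k' r : Fin n) :
    (X r - X (Equiv.swap k k' r) : MvPolynomial (Fin n) ℚ) = C (sg k k' r) * (X k - X k') := by
  unfold sg
  by_cases h : r = k
  · subst h; simp
  by_cases h' : r = k'
  · subst h'; simp [h]
  · simp [h, h', Equiv.swap_apply_of_ne_of_ne h h']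

theorem monk_asc {n : ℕ} {S : Equiv.Perm (Fin n) → MvPolynomial (Fin n) ℚ}
    {k k' : Fin n} (hk : (k' : ℕ) = k + 1) (v : Equiv.Perm (Fin n)) (r : Fin n)
    (hv : v k < v k') :
    ∑ j, C (cf v r j) * DD S k k' (v * Equiv.swap r j) = C (sg k k' r) * S v := by
  have hkk : k < k' := Fin.lt_def.2 (by omega)
  rw [Finset.sum_eq_single (Equiv.swap k k' r)]
  · unfold sg
    by_cases h : r = k
    · subst h
      simp [DD, cf, cov_adj _ hk, not_cov _ hkk.le, hv]
    by_cases h' : r = k'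
    · subst h'
      simp [DD, cf, cov_adj _ hk, not_cov _ hkk.le, hv, h, Equiv.swap_comm r k]
    · have hrr : ∀ u : Equiv.Perm (Fin n), cf u r r = 0 := fun u => by simp [cf]
      simp only [Equiv.swap_apply_of_ne_of_ne h h', hrr, if_neg h, if_neg h', C_0, zero_mul,
        sub_zero]
  · intro j _ hj
    unfold DD
    split_ifs with hd
    · rw [cf_asc v hk hj hv hd]; simp
    · simp
  · simp

theorem monk_desc {n : ℕ} {S : Equiv.Perm (Fin n) → MvPolynomial (Fin n) ℚ}
    {k k' : Fin n} (hk : (k' : ℕ) = k + 1) (v : Equiv.Perm (Fin n)) (r : Fin n)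
    (hv : v k' < v k) :
    ∑ j, C (cf v r j) * DD S k k' (v * Equiv.swap r j) = C (sg k k' r) * S v +
     ∑ j, C (cf (v * Equiv.swap k k') (Equiv.swap k k' r) j) *
      S (v * Equiv.swap k k' * Equiv.swap (Equiv.swap k k' r) j) := by
  have hkk : k < k' := Fin.lt_def.2 (by omega)
  rw [← sub_eq_iff_eq_add, ← Equiv.sum_comp (Equiv.swap k k') (fun j =>
    C (cf (v * Equiv.swap k k') (Equiv.swap k k' r) j) *
      S (v * Equiv.swap k k' * Equiv.swap (Equiv.swap k k' r) j)), ← Finset.sum_sub_distrib]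
  simp only [swap_conj]
  rw [Finset.sum_eq_single (Equiv.swap k k' r)]
  · unfold sg
    by_cases h : r = k
    · subst h
      simp [DD, cf, cov_adj _ hk, not_cov _ hkk.le, hv, hv.not_gt]
    by_cases h' : r = k'
    · subst h'
      simp [DD, cf, cov_adj _ hk, not_cov _ hkk.le, hv, hv.not_gt, h, Equiv.swap_comm r k]
    · have hrr : ∀ u : Equiv.Perm (Fin n), cf u r r = 0 := fun u => by simp [cf]
      simp only [Equiv.swap_apply_of_ne_of_ne h h', hrr, if_neg h, if_neg h', C_0, zero_mul,
        sub_zero]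
  · intro j _ hj
    rw [cf_desc v hk hj hv]
    unfold DD
    split_ifs with hd <;> simp
  · simp

theorem degreeOf_eq_zero_iff_aux {n : ℕ} (F : MvPolynomial (Fin n) ℚ) (i : Fin n) :
    degreeOf i F = 0 ↔ i ∉ F.vars := by
  classical
  rw [degreeOf_def, Multiset.count_eq_zero, vars_def, Multiset.mem_toFinset]

theorem eq_zero_of_sym {n : ℕ} (F : MvPolynomial (Fin n) ℚ)
    (hsym : ∀ k k' : Fin n, (k' : ℕ) = k + 1 → rename (Equiv.swap k k') F = F)
    (l : Fin n) (hl : (l : ℕ) + 1 = n) (hdeg : degreeOf l F = 0)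
    (h0 : eval (fun _ => (0 : ℚ)) F = 0) : F = 0 := by
  have hall : ∀ m : ℕ, ∀ i : Fin n, (i : ℕ) + m + 1 = n → degreeOf i F = 0 := by
    intro m
    induction m with
    | zero =>
      intro i hi
      have : i = l := Fin.ext (by omega)
      rw [this, hdeg]
    | succ m ih =>
      intro i hi
      have h1 := ih ⟨i + 1, by omega⟩ (by simp; omega)
      have h2 := degreeOf_rename_of_injective (p := F)
        (Equiv.swap i ⟨i + 1, by omega⟩).injective i
      rw [hsym _ _ rfl, Equiv.swap_apply_left, h1] at h2
      exact h2.symm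
  have hv : F.vars = ∅ := by
    rw [Finset.eq_empty_iff_forall_notMem]
    intro i hi
    have := hall (n - 1 - i) i (by omega)
    rw [degreeOf_eq_zero_iff_aux] at this
    exact this hi
  rw [vars_eq_empty_iff_eq_C] at hv
  rw [hv] at h0 ⊢
  rw [eval_C] at h0
  rw [h0, C_0]

theorem monk {n : ℕ} {S : Equiv.Perm (Fin n) → MvPolynomial (Fin n) ℚ} (hS : Rec S)
    (hlong : S Fin.revPerm = ∏ i : Fin n, X i ^ (n - 1 - (i : ℕ))) (v : Equiv.Perm (Fin n))
    (r : Fin n) (hr : ∃ j, r < j ∧ v r < v j) :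
    X r * S v = ∑ j, C (cf v r j) * S (v * Equiv.swap r j) := by
  induction hN : invs v using Nat.strong_induction_on generalizing v r with
  | _ N ih =>
  subst hN
  have hn : 0 < n := by have := r.isLt; omega
  rw [← sub_eq_zero]
  refine eq_zero_of_sym _ ?_ ⟨n - 1, by omega⟩ (by simp; omega) ?_ ?_
  · intro k k' hk
    have hkk : k < k' := Fin.lt_def.2 (by omega)
    have key : C (sg k k' r) * S v + X (Equiv.swap k k' r) * DD S k k' v =
        ∑ j, C (cf v r j) * DD S k k' (v * Equiv.swap r j) := by
      rcases lt_or_gt_of_ne (fun e => hkk.ne (v.injective e) : v k ≠ v k') with h | h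
      · rw [monk_asc hk v r h, DD, if_neg h.not_gt, mul_zero, add_zero]
      · rw [monk_desc hk v r h, DD, if_pos h]
        congr 1
        refine ih _ ?_ _ _ ?_ rfl
        · have := invs_swap (v * Equiv.swap k k') hk (by simpa using h)
          rw [Equiv.mul_swap_mul_self] at this
          omega
        · obtain ⟨j, hj1, hj2⟩ := hr
          refine ⟨Equiv.swap k k' j, sw_mono hk hj1 ?_, by simpa using hj2⟩
          rintro ⟨rfl, rfl⟩
          exact absurd hj2 h.not_gt
    have hS' : ∀ u, rename (Equiv.swap k k') (S u) = S u - (X k - X k') * DD S k k' u :=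
      fun u => by rw [← sub_rename_S hS hk]; ring
    rw [map_sub, map_mul, rename_X, map_sum]
    simp only [map_mul, rename_C, hS', mul_sub, Finset.sum_sub_distrib]
    have h1 := X_sub_sg k k' r
    have h2 : ∑ j, C (cf v r j) * ((X k - X k') * DD S k k' (v * Equiv.swap r j)) =
        (X k - X k') * ∑ j, C (cf v r j) * DD S k k' (v * Equiv.swap r j) := by
      rw [Finset.mul_sum]
      exact Finset.sum_congr rfl fun j _ => by ring
    rw [h2, ← key]
    linear_combination (-S v) * h1
  · have hd : ∀ u, degreeOf (⟨n - 1, by omega⟩ : Fin n) (S u) = 0 := fun u => by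
      have := degreeOf_S hS hlong u ⟨n - 1, by omega⟩
      simpa using this
    obtain ⟨j, hj, _⟩ := hr
    have hrn : (⟨n - 1, by omega⟩ : Fin n) ≠ r := by
      intro e
      have h1 := Fin.lt_def.1 hj
      have h2 := congrArg Fin.val e
      have h3 := j.isLt
      simp only at h2
      omega
    rw [← Nat.le_zero]
    refine (degreeOf_sub_le _ _ _).trans (max_le ?_ ?_)
    · refine (degreeOf_mul_le _ _ _).trans ?_
      rw [hd, degreeOf_X_of_ne hrn]
    · refine (degreeOf_sum_le _ _ _).trans (Finset.sup_le fun j _ => ?_)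
      exact (degreeOf_C_mul_le _ _ _).trans (hd _).le
  · rw [map_sub, map_mul, eval_X, zero_mul, map_sum, Finset.sum_eq_zero, sub_zero]
    intro j _
    rw [map_mul, eval_C]
    by_cases h1 : cov v r j
    · rw [eval_zero_S hS hlong _ (invs_pos _ h1.1 (by simpa using h1.2.1)), mul_zero]
    by_cases h2 : cov v j r
    · rw [eval_zero_S hS hlong _ (invs_pos _ h2.1 (by simpa using h2.2.1)), mul_zero]
    · simp [cf, h1, h2]

theorem main_aux {n : ℕ} {S : Equiv.Perm (Fin n) → MvPolynomial (Fin n) ℚ} (hS : Rec S)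
    (hlong : S Fin.revPerm = ∏ i : Fin n, X i ^ (n - 1 - (i : ℕ))) (w : Equiv.Perm (Fin n)) :
    (n132 n w : ℚ) + 1 ≤ eval (fun _ => (1 : ℚ)) (S w) := by
  classical
  induction hN : wt w using Nat.strong_induction_on generalizing w with
  | _ N ih =>
  subst hN
  by_cases hw : w = Fin.revPerm
  · subst hw
    have : n132 n Fin.revPerm = 0 := by
      unfold n132
      rw [Finset.card_eq_zero, Finset.filter_eq_empty_iff]
      rintro ⟨i, j, k⟩ - ⟨h1, h2, h3, h4⟩
      simp only [Fin.revPerm_apply, Fin.rev_lt_rev] at h1 h2 h3 h4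
      exact absurd (h1.trans h2) h3.not_gt
    rw [this, hlong]
    simp [map_prod]
  -- the first position that is not a right-to-left maximum
  let A : Finset (Fin n) := Finset.univ.filter fun r => ∃ j, r < j ∧ w r < w j
  have hA : A.Nonempty := by
    obtain ⟨k, k', hk, h⟩ := exists_ascent w hw
    exact ⟨k, by simp only [A, Finset.mem_filter, Finset.mem_univ, true_and]
                 exact ⟨k', Fin.lt_def.2 (by omega), h⟩⟩
  obtain ⟨r, hrA, hrmin⟩ := A.exists_min_image id hA
  have hr : ∃ j, r < j ∧ w r < w j := by simpa [A] using hrA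
  have hmin : ∀ a, a < r → ∀ j, a < j → ¬ w a < w j := by
    intro a ha j haj hlt
    have := hrmin a (by simp only [A, Finset.mem_filter, Finset.mem_univ, true_and]
                        exact ⟨j, haj, hlt⟩)
    exact absurd this (not_le.2 ha)
  let B : Finset (Fin n) := Finset.univ.filter fun j => r < j ∧ w r < w j
  have hB : B.Nonempty := by
    obtain ⟨j, hj⟩ := hr
    exact ⟨j, by simpa [B] using hj⟩
  obtain ⟨s, hsB, hsmin⟩ := B.exists_min_image id hB
  obtain ⟨t, htB, htmin⟩ := B.exists_min_image w hB
  have hs : r < s ∧ w r < w s := by simpa [B] using hsB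
  have ht : r < t ∧ w r < w t := by simpa [B] using htB
  have hs' : ∀ p, r < p → p < s → ¬ w r < w p := by
    intro p h1 h2 h3
    exact absurd (hsmin p (by simp [B, h1, h3])) (not_le.2 h2)
  have hgap : ∀ p, ¬ (w r < w p ∧ w p < w t) := by
    rintro p ⟨h1, h2⟩
    rcases lt_trichotomy p r with h | h | h
    · exact hmin p h t (h.trans ht.1) h2
    · subst h; exact lt_irrefl _ h1
    · exact absurd (htmin p (by simp [B, h, h1])) (not_le.2 h2)
  have hcs : cov w r s := ⟨hs.1, hs.2, fun p h1 h2 h3 => hs' p h1 h2 h3.1⟩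
  have hct : cov w r t := ⟨ht.1, ht.2, fun p _ _ => hgap p⟩
  have hmonk := congrArg (eval (fun _ => (1 : ℚ))) (monk hS hlong w r hr)
  have hcf : ∀ j, cf w r j = if cov w r j then 1 else 0 := by
    intro j
    have : ¬ cov w j r := fun h => hmin j h.1 r h.1 h.2.1
    simp [cf, this]
  simp only [map_mul, eval_X, one_mul, map_sum, eval_C, hcf] at hmonk
  have hih : ∀ j, cov w r j →
      (n132 n (w * Equiv.swap r j) : ℚ) + 1 ≤ eval (fun _ => (1 : ℚ)) (S (w * Equiv.swap r j)) :=
    fun j hj => ih _ (wt_lt w hj.1 hj.2.1) _ rfl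
  have hnn : ∀ j ∈ Finset.univ, (0 : ℚ) ≤ (if cov w r j then 1 else 0) *
      eval (fun _ => (1 : ℚ)) (S (w * Equiv.swap r j)) := by
    intro j _
    split_ifs with h
    · have := hih j h
      have h0 : (0 : ℚ) ≤ n132 n (w * Equiv.swap r j) := Nat.cast_nonneg _
      linarith
    · simp
  have hstep := n132_step w ht.1 ht.2 hgap
  by_cases hst : s = t
  · subst hst
    have hemp : (Finset.univ.filter fun j => r < j ∧ j < s ∧ w r < w j).card = 0 := by
      rw [Finset.card_eq_zero, Finset.filter_eq_empty_iff]
      rintro j - ⟨h1, h2, h3⟩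
      exact hs' j h1 h2 h3
    rw [hemp, add_zero] at hstep
    have h1 := Finset.single_le_sum hnn (Finset.mem_univ s)
    rw [← hmonk, if_pos hcs, one_mul] at h1
    have h2 := hih s hcs
    have h3 : (n132 n w : ℚ) ≤ n132 n (w * Equiv.swap r s) := by exact_mod_cast hstep
    linarith
  · have hlt : s < t := lt_of_le_of_ne (hsmin t htB) hst
    have hfirst := n132_first w hlt hs.1 hs' ht.2 hgap
    have h1 := Finset.sum_le_sum_of_subset_of_nonneg (Finset.subset_univ {s, t})
      (fun j hj _ => hnn j hj)
    rw [← hmonk, Finset.sum_pair hst, if_pos hcs, if_pos hct, one_mul, one_mul] at h1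
    have h2 := hih s hcs
    have h3 := hih t hct
    have h4 : (n132 n w : ℚ) ≤ n132 n (w * Equiv.swap r t) + (n132 n (w * Equiv.swap r s) + 1) := by
      exact_mod_cast hstep.trans (Nat.add_le_add_left hfirst _)
    linarith

/-- Suppose `S` is the family of Schubert polynomials of `S_n`, i.e.
`S w₀ = x₀^{n-1} x₁^{n-2} ⋯` for the longest element `w₀` (here `0`-indexed), and
whenever `w i < w (i+1)` we have `(x_i - x_{i+1}) · S w = S (w s_i) - s_i (S (w s_i))`
(the divided-difference recurrence `S w = ∂_i S_{w s_i}`).  Then for every `w`,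
`S_w(1,…,1) ≥ n₁₃₂(w) + 1`. -/
theorem schubert_eval_one_ge_n132 (n : ℕ)
    (S : Equiv.Perm (Fin n) → MvPolynomial (Fin n) ℚ)
    (hlong : S Fin.revPerm = ∏ i : Fin n, X i ^ (n - 1 - (i : ℕ)))
    (hrec : ∀ (w : Equiv.Perm (Fin n)) (i : ℕ) (h : i + 1 < n),
      w ⟨i, by omega⟩ < w ⟨i + 1, h⟩ →
        (X (⟨i, by omega⟩ : Fin n) - X ⟨i + 1, h⟩) * S w =
          S (w * Equiv.swap ⟨i, by omega⟩ ⟨i + 1, h⟩) -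
            rename (Equiv.swap (⟨i, by omega⟩ : Fin n) ⟨i + 1, h⟩)
              (S (w * Equiv.swap ⟨i, by omega⟩ ⟨i + 1, h⟩))) :
    ∀ w : Equiv.Perm (Fin n), (n132 n w : ℚ) + 1 ≤ eval (fun _ => (1 : ℚ)) (S w) := by
  exact main_aux (fun w k k' hk h => by
    obtain ⟨k, hk1⟩ := k
    obtain ⟨k', hk2⟩ := k'
    simp only at hk
    subst hk
    exact hrec w k hk2 h) hlong

end Schub
end

section
/- Let w ∈ S_n be a grassmannian permutation corresponding to the partition λ (so w = w_λ with w_λ(i) = i + λ_{L−i+1} for i ≤ L, one descent at L). Then the coefficient of x^α in the Schubert polynomial S_{w_λ} equals the Kostka number K_{λ,α}, the number of semistandard Young tableaux of shape λ and content α. -/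
namespace Schub

open MvPolynomial

/-- `(i,j)` (1-based) is a box of the Young diagram of the partition `λ` with at
most `L` parts. -/
def InShape (L : ℕ) (lam : ℕ → ℕ) (b : ℕ × ℕ) : Prop :=
  1 ≤ b.1 ∧ b.1 ≤ L ∧ 1 ≤ b.2 ∧ b.2 ≤ lam b.1

/-- `T` is a semistandard Young tableau of shape `λ` (at most `L` parts, entries in
`[L]`, rows weakly increasing, columns strictly increasing) with content `α`,
where the entry `k+1` is counted by `α k` for `k : Fin n`. -/
def IsSSYT (n L : ℕ) (lam : ℕ → ℕ) (α : Fin n → ℕ) (T : ℕ × ℕ → ℕ) : Prop :=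
  (∀ b, ¬ InShape L lam b → T b = 0) ∧
  (∀ b, InShape L lam b → 1 ≤ T b ∧ T b ≤ L) ∧
  (∀ i j j', InShape L lam (i, j) → InShape L lam (i, j') → j ≤ j' → T (i, j) ≤ T (i, j')) ∧
  (∀ i i' j, InShape L lam (i, j) → InShape L lam (i', j) → i < i' → T (i, j) < T (i', j)) ∧
  (∀ k : Fin n, {b | InShape L lam b ∧ T b = (k : ℕ) + 1}.ncard = α k)

/-- Semistandardness without the content condition. -/
def SS (L : ℕ) (lam : ℕ → ℕ) (T : ℕ × ℕ → ℕ) : Prop :=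
  (∀ b, ¬ InShape L lam b → T b = 0) ∧
  (∀ b, InShape L lam b → 1 ≤ T b ∧ T b ≤ L) ∧
  (∀ i j j', InShape L lam (i, j) → InShape L lam (i, j') → j ≤ j' → T (i, j) ≤ T (i, j')) ∧
  (∀ i i' j, InShape L lam (i, j) → InShape L lam (i', j) → i < i' → T (i, j) < T (i', j))

instance (L : ℕ) (lam : ℕ → ℕ) (b : ℕ × ℕ) : Decidable (InShape L lam b) := by
  unfold InShape; infer_instance

/-- The boxes of the shape as a finset. -/
def shapeF (L : ℕ) (lam : ℕ → ℕ) : Finset (ℕ × ℕ) :=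
  ((Finset.Icc 1 L).sigma fun i => Finset.Icc 1 (lam i)).map
    (Equiv.sigmaEquivProd ℕ ℕ).toEmbedding

lemma mem_shapeF (L : ℕ) (lam : ℕ → ℕ) (b : ℕ × ℕ) : b ∈ shapeF L lam ↔ InShape L lam b := by
  obtain ⟨i, j⟩ := b
  simp [shapeF, InShape, and_assoc]

lemma card_shapeF (L : ℕ) (lam : ℕ → ℕ) :
    (shapeF L lam).card = ∑ k ∈ Finset.Icc 1 L, lam k := by
  simp [shapeF]

lemma SS_finite (L : ℕ) (lam : ℕ → ℕ) : {T | SS L lam T}.Finite := by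
  let F : ((shapeF L lam) → Fin (L + 1)) → (ℕ × ℕ → ℕ) := fun f b =>
    if h : b ∈ shapeF L lam then (f ⟨b, h⟩ : ℕ) else 0
  refine (Set.finite_range F).subset ?_
  intro T hT
  refine ⟨fun b => ⟨T b, ?_⟩, ?_⟩
  · have := (hT.2.1 b ((mem_shapeF _ _ _).1 b.2)).2
    omega
  · funext b
    by_cases h : b ∈ shapeF L lam
    · simp [F, h]
    · simp only [F, h, dite_false]
      exact (hT.1 b (fun h' => h ((mem_shapeF _ _ _).2 h'))).symm

/-- Generating function of semistandard tableaux. -/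
noncomputable def ssGen {R : Type*} [CommRing R] (x : ℕ → R) (L : ℕ) (lam : ℕ → ℕ) : R :=
  ∑ T ∈ (SS_finite L lam).toFinset, ∏ b ∈ shapeF L lam, x (T b - 1)

/-- Partition attached to increasing exponents. -/
def lamOf (L : ℕ) (m : Fin L → ℕ) : ℕ → ℕ := fun k =>
  if h : 1 ≤ k ∧ k ≤ L then m ⟨L - k, by omega⟩ - (L - k) else 0

lemma sum_fin_sub (f : ℕ → ℕ) (L : ℕ) :
    ∑ i : Fin L, f (L - i) = ∑ k ∈ Finset.Icc 1 L, f k := by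
  induction L with
  | zero => simp
  | succ L ih =>
    rw [Fin.sum_univ_succ, Finset.sum_Icc_succ_top (by omega), ← ih, add_comm]
    simp

lemma initial_seg (a : ℕ) (P : ℕ → Prop) [DecidablePred P]
    (hP : ∀ j j', 1 ≤ j → j ≤ j' → j' ≤ a → P j' → P j) (j : ℕ) (h1 : 1 ≤ j) (h2 : j ≤ a) :
    P j ↔ j ≤ ((Finset.Icc 1 a).filter P).card := by
  constructor
  · intro h
    have : Finset.Icc 1 j ⊆ (Finset.Icc 1 a).filter P := by
      intro k hk
      simp only [Finset.mem_Icc, Finset.mem_filter] at hk ⊢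
      exact ⟨⟨hk.1, hk.2.trans h2⟩, hP k j hk.1 hk.2 h2 h⟩
    simpa using Finset.card_le_card this
  · intro h
    by_contra hn
    have : (Finset.Icc 1 a).filter P ⊆ Finset.Icc 1 (j - 1) := by
      intro k hk
      simp only [Finset.mem_Icc, Finset.mem_filter] at hk ⊢
      refine ⟨hk.1.1, ?_⟩
      by_contra hk'
      exact hn (hP j k h1 (by omega) hk.1.2 hk.2)
    have := Finset.card_le_card this
    simp at this
    omega

lemma le_entry {L : ℕ} {lam : ℕ → ℕ} (hanti : ∀ i j, 1 ≤ i → i ≤ j → j ≤ L → lam j ≤ lam i)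
    {T : ℕ × ℕ → ℕ} (hT : SS L lam T) (i j : ℕ) (h : InShape L lam (i, j)) : i ≤ T (i, j) := by
  induction i with
  | zero => simp
  | succ i ih =>
    obtain ⟨h1, h2, h3, h4⟩ := h
    simp only at h1 h2 h3 h4
    rcases Nat.eq_zero_or_pos i with rfl | hi
    · exact (hT.2.1 _ ⟨h1, h2, h3, h4⟩).1
    · have h' : InShape L lam (i, j) :=
        ⟨hi, by simp; omega, h3, h4.trans (hanti i (i + 1) hi (by omega) h2)⟩
      have := ih h'
      have := hT.2.2.2 i (i + 1) j h' ⟨h1, h2, h3, h4⟩ (by omega)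
      omega

/-- number of entries at most `L` in row `k` -/
def rowCount (L : ℕ) (lam : ℕ → ℕ) (T : ℕ × ℕ → ℕ) (k : ℕ) : ℕ :=
  ((Finset.Icc 1 (lam k)).filter fun j => T (k, j) ≤ L).card

lemma rowCount_spec {L : ℕ} {lam : ℕ → ℕ}
    {T : ℕ × ℕ → ℕ} (hT : SS (L + 1) lam T) (k j : ℕ) (hk : k ≤ L) (h : InShape (L + 1) lam (k, j)) :
    T (k, j) ≤ L ↔ j ≤ rowCount L lam T k := by
  obtain ⟨h1, h2, h3, h4⟩ := h
  simp only at h1 h2 h3 h4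
  refine initial_seg (lam k) (fun j => T (k, j) ≤ L) ?_ j h3 h4
  intro j j' hj hjj' hj' hh
  exact (hT.2.2.1 k j j' ⟨h1, h2, hj, hjj'.trans hj'⟩ ⟨h1, h2, hj.trans hjj', hj'⟩ hjj').trans hh

lemma rowCount_interlace {L : ℕ} {lam : ℕ → ℕ}
    (hanti : ∀ i j, 1 ≤ i → i ≤ j → j ≤ L + 1 → lam j ≤ lam i)
    {T : ℕ × ℕ → ℕ} (hT : SS (L + 1) lam T) (k : ℕ) (hk1 : 1 ≤ k) (hk : k ≤ L) :
    lam (k + 1) ≤ rowCount L lam T k ∧ rowCount L lam T k ≤ lam k := by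
  constructor
  · rcases Nat.eq_zero_or_pos (lam (k + 1)) with h0 | h0
    · omega
    · have hm := hanti k (k + 1) hk1 (by omega) (by omega)
      have hs : InShape (L + 1) lam (k, lam (k + 1)) := ⟨hk1, by simp; omega, h0, hm⟩
      have hs' : InShape (L + 1) lam (k + 1, lam (k + 1)) := ⟨by simp, by simp; omega, h0, le_rfl⟩
      rw [← rowCount_spec hT k _ hk hs]
      have := hT.2.2.2 k (k + 1) _ hs hs' (by omega)
      have := (hT.2.1 _ hs').2
      omega
  · refine (Finset.card_filter_le _ _).trans ?_
    simp

/-- Restriction of a tableau to a subshape. -/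
def restr (L : ℕ) (mu : ℕ → ℕ) (T : ℕ × ℕ → ℕ) : ℕ × ℕ → ℕ :=
  fun b => if InShape L mu b then T b else 0

/-- Extension of a tableau by the maximal entry. -/
def extnd (L : ℕ) (lam mu : ℕ → ℕ) (T : ℕ × ℕ → ℕ) : ℕ × ℕ → ℕ :=
  fun b => if InShape L mu b then T b else if InShape (L + 1) lam b then L + 1 else 0

lemma InShape.mono {L : ℕ} {lam mu : ℕ → ℕ} (h2 : ∀ k, 1 ≤ k → k ≤ L → mu k ≤ lam k)
    {b : ℕ × ℕ} (h : InShape L mu b) : InShape (L + 1) lam b := by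
  obtain ⟨a1, a2, a3, a4⟩ := h
  exact ⟨a1, by omega, a3, a4.trans (h2 _ a1 a2)⟩

lemma restr_SS {L : ℕ} {lam mu : ℕ → ℕ} (h2 : ∀ k, 1 ≤ k → k ≤ L → mu k ≤ lam k)
    {T : ℕ × ℕ → ℕ} (hT : SS (L + 1) lam T) (hle : ∀ b, InShape L mu b → T b ≤ L) :
    SS L mu (restr L mu T) := by
  refine ⟨fun b hb => by simp [restr, hb], fun b hb => ?_, fun i j j' h h' hj => ?_,
    fun i i' j h h' hj => ?_⟩
  · simp only [restr, hb, if_true]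
    exact ⟨(hT.2.1 b (hb.mono h2)).1, hle b hb⟩
  · simp only [restr, h, h', if_true]
    exact hT.2.2.1 i j j' (h.mono h2) (h'.mono h2) hj
  · simp only [restr, h, h', if_true]
    exact hT.2.2.2 i i' j (h.mono h2) (h'.mono h2) hj

lemma extnd_le {L : ℕ} {lam mu : ℕ → ℕ}
    {T : ℕ × ℕ → ℕ} (hT : SS L mu T) (b : ℕ × ℕ) (hb : InShape (L + 1) lam b) :
    extnd L lam mu T b ≤ L ↔ InShape L mu b := by
  by_cases h : InShape L mu b
  · simp only [extnd, h, if_true, iff_true]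
    exact (hT.2.1 b h).2
  · simp [extnd, h, hb]

lemma extnd_SS {L : ℕ} {lam mu : ℕ → ℕ}
    (hanti : ∀ i j, 1 ≤ i → i ≤ j → j ≤ L + 1 → lam j ≤ lam i)
    (h1 : ∀ k, 1 ≤ k → k ≤ L → lam (k + 1) ≤ mu k)
    (h2 : ∀ k, 1 ≤ k → k ≤ L → mu k ≤ lam k)
    {T : ℕ × ℕ → ℕ} (hT : SS L mu T) : SS (L + 1) lam (extnd L lam mu T) := by
  have key : ∀ i i' j, InShape (L + 1) lam (i, j) → InShape (L + 1) lam (i', j) → i < i' →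
      InShape L mu (i, j) := by
    intro i i' j h h' hi
    obtain ⟨a1, a2, a3, a4⟩ := h
    obtain ⟨b1, b2, b3, b4⟩ := h'
    simp only at *
    exact ⟨a1, by simp; omega, a3,
      b4.trans ((hanti (i + 1) i' (by omega) (by omega) b2).trans (h1 i a1 (by omega)))⟩
  refine ⟨fun b hb => ?_, fun b hb => ?_, fun i j j' h h' hj => ?_,
    fun i i' j h h' hj => ?_⟩
  · have : ¬ InShape L mu b := fun h => hb (h.mono h2)
    simp [extnd, hb, this]
  · by_cases h : InShape L mu b
    · simp only [extnd, h, if_true]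
      have := hT.2.1 b h
      omega
    · simp [extnd, h, hb]
  · by_cases g' : InShape L mu (i, j')
    · have g : InShape L mu (i, j) := ⟨g'.1, g'.2.1, h.2.2.1, hj.trans g'.2.2.2⟩
      simp only [extnd, g, g', if_true]
      exact hT.2.2.1 i j j' g g' hj
    · by_cases g : InShape L mu (i, j)
      · simp only [extnd, g, g', h', if_true, if_false]
        have := (hT.2.1 _ g).2
        omega
      · simp [extnd, g, g', h, h']
  · have g := key i i' j h h' hj
    by_cases g' : InShape L mu (i', j)
    · simp only [extnd, g, g', if_true]
      exact hT.2.2.2 i i' j g g' hj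
    · simp only [extnd, g, g', h', if_true, if_false]
      have := (hT.2.1 _ g).2
      omega

lemma lamOf_apply (L : ℕ) (m : Fin L → ℕ) (k : ℕ) (h1 : 1 ≤ k) (h2 : k ≤ L) :
    lamOf L m k = m ⟨L - k, by omega⟩ - (L - k) := by
  simp [lamOf, h1, h2]

lemma InShape_congr {L : ℕ} {mu nu : ℕ → ℕ} (h : ∀ k, 1 ≤ k → k ≤ L → mu k = nu k) (b : ℕ × ℕ) :
    InShape L mu b ↔ InShape L nu b := by
  unfold InShape
  constructor
  · rintro ⟨a1, a2, a3, a4⟩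
    exact ⟨a1, a2, a3, by rw [← h _ a1 a2]; exact a4⟩
  · rintro ⟨a1, a2, a3, a4⟩
    exact ⟨a1, a2, a3, by rw [h _ a1 a2]; exact a4⟩

lemma ssGen_branch {R : Type*} [CommRing R] (x : ℕ → R) (L : ℕ) (lam : ℕ → ℕ)
    (hanti : ∀ i j, 1 ≤ i → i ≤ j → j ≤ L + 1 → lam j ≤ lam i)
    (e : Fin (L + 1) → ℕ) (he : ∀ i, e i = i + lam (L + 1 - i)) :
    ssGen x (L + 1) lam =
      ∑ m ∈ Fintype.piFinset (fun i : Fin L => Finset.Ico (e i.castSucc) (e i.succ)),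
        x L ^ (e 0 + ∑ i : Fin L, (e i.succ - 1 - m i)) * ssGen x L (lamOf L m) := by
  classical
  let g : (ℕ × ℕ → ℕ) → Fin L → ℕ := fun T i => i + rowCount L lam T (L - i)
  have hg : ∀ T ∈ (SS_finite (L + 1) lam).toFinset,
      g T ∈ Fintype.piFinset (fun i : Fin L => Finset.Ico (e i.castSucc) (e i.succ)) := by
    intro T hT
    rw [Set.Finite.mem_toFinset] at hT
    rw [Fintype.mem_piFinset]
    intro i
    have hi := i.2
    have := rowCount_interlace hanti hT (L - i) (by omega) (by omega)
    rw [Finset.mem_Ico, he, he]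
    simp only [Fin.val_castSucc, Fin.val_succ, g]
    rw [show L + 1 - (i : ℕ) = L - i + 1 by omega, show L + 1 - ((i : ℕ) + 1) = L - i by omega]
    omega
  unfold ssGen
  rw [← Finset.sum_fiberwise_of_maps_to hg]
  refine Finset.sum_congr rfl fun m hm => ?_
  rw [Fintype.mem_piFinset] at hm
  set mu := lamOf L m with hmu
  have hm' : ∀ k (h1 : 1 ≤ k) (h2 : k ≤ L), m ⟨L - k, by omega⟩ = (L - k) + mu k ∧
      lam (k + 1) ≤ mu k ∧ mu k ≤ lam k := by
    intro k h1 h2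
    have := hm ⟨L - k, by omega⟩
    rw [Finset.mem_Ico, he, he] at this
    simp only [Fin.val_castSucc, Fin.val_succ] at this
    rw [show L + 1 - (L - k) = k + 1 by omega, show L + 1 - (L - k + 1) = k by omega] at this
    rw [hmu, lamOf_apply L m k h1 h2]
    omega
  have i1 : ∀ k, 1 ≤ k → k ≤ L → lam (k + 1) ≤ mu k := fun k h1 h2 => (hm' k h1 h2).2.1
  have i2 : ∀ k, 1 ≤ k → k ≤ L → mu k ≤ lam k := fun k h1 h2 => (hm' k h1 h2).2.2
  have hgm : ∀ T, g T = m ↔ ∀ k, 1 ≤ k → k ≤ L → rowCount L lam T k = mu k := by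
    intro T
    constructor
    · rintro h k h1 h2
      have h3 := congrFun h ⟨L - k, by omega⟩
      rw [(hm' k h1 h2).1] at h3
      simp only [g] at h3
      rw [show L - (L - k) = k by omega] at h3
      omega
    · intro h
      funext i
      have hi := i.2
      have h3 := h (L - i) (by omega) (by omega)
      have h4 := (hm' (L - i) (by omega) (by omega)).1
      have h5 : (⟨L - (L - i), by omega⟩ : Fin L) = i := Fin.ext (by simp; omega)
      rw [h5] at h4
      simp only [g]
      omega
  have hfib : ∀ T, SS (L + 1) lam T → g T = m →
      ∀ b, InShape (L + 1) lam b → (T b ≤ L ↔ InShape L mu b) := by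
    intro T hT hgT b hb
    rw [hgm] at hgT
    obtain ⟨k, j⟩ := b
    by_cases hk : k ≤ L
    · rw [rowCount_spec hT k j hk hb, hgT k hb.1 hk]
      exact ⟨fun h => ⟨hb.1, hk, hb.2.2.1, h⟩, fun h => h.2.2.2⟩
    · have := le_entry hanti hT k j hb
      constructor
      · intro h; omega
      · intro h; exact absurd h.2.1 hk
  have hcard : (shapeF (L + 1) lam \ shapeF L mu).card =
      e 0 + ∑ i : Fin L, (e i.succ - 1 - m i) := by
    have hsub : shapeF L mu ⊆ shapeF (L + 1) lam := by
      intro b hb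
      rw [mem_shapeF] at *
      exact hb.mono i2
    rw [Finset.card_sdiff_of_subset hsub, card_shapeF, card_shapeF,
      Finset.sum_Icc_succ_top (by omega), he 0]
    have : ∑ i : Fin L, (e i.succ - 1 - m i) = ∑ i : Fin L, (fun k => lam k - mu k) (L - i) := by
      refine Finset.sum_congr rfl fun i _ => ?_
      have hi := i.2
      have h4 := (hm' (L - i) (by omega) (by omega)).1
      have h5 : (⟨L - (L - i), by omega⟩ : Fin L) = i := Fin.ext (by simp; omega)
      rw [h5] at h4
      rw [h4, he]
      simp only [Fin.val_succ]
      rw [show L + 1 - ((i : ℕ) + 1) = L - i by omega]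
      omega
    rw [this, sum_fin_sub (fun k => lam k - mu k) L]
    have h6 : ∑ k ∈ Finset.Icc 1 L, lam k =
        ∑ k ∈ Finset.Icc 1 L, (lam k - mu k) + ∑ k ∈ Finset.Icc 1 L, mu k := by
      rw [← Finset.sum_add_distrib]
      refine Finset.sum_congr rfl fun k hk => ?_
      rw [Finset.mem_Icc] at hk
      have := i2 k hk.1 hk.2
      omega
    simp
    omega
  rw [Finset.mul_sum]
  refine Finset.sum_bij' (fun T _ => restr L mu T) (fun T _ => extnd L lam mu T) ?_ ?_ ?_ ?_ ?_
  · intro T hT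
    rw [Finset.mem_filter, Set.Finite.mem_toFinset] at hT
    rw [Set.Finite.mem_toFinset]
    exact restr_SS i2 hT.1 fun b hb => (hfib T hT.1 hT.2 b (hb.mono i2)).2 hb
  · intro T hT
    rw [Set.Finite.mem_toFinset] at hT
    rw [Finset.mem_filter, Set.Finite.mem_toFinset]
    have hS := extnd_SS hanti i1 i2 hT
    refine ⟨hS, (hgm _).2 fun k h1 h2 => ?_⟩
    have : (Finset.Icc 1 (lam k)).filter (fun j => extnd L lam mu T (k, j) ≤ L)
        = Finset.Icc 1 (mu k) := by
      ext j
      simp only [Finset.mem_filter, Finset.mem_Icc]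
      constructor
      · rintro ⟨⟨a, b⟩, c⟩
        rw [extnd_le hT _ ⟨h1, by simp; omega, a, b⟩] at c
        exact ⟨a, c.2.2.2⟩
      · rintro ⟨a, b⟩
        have b' := b.trans (i2 k h1 h2)
        refine ⟨⟨a, b'⟩, ?_⟩
        rw [extnd_le hT _ ⟨h1, by simp; omega, a, b'⟩]
        exact ⟨h1, h2, a, b⟩
    rw [rowCount, this]
    simp
  · intro T hT
    rw [Finset.mem_filter, Set.Finite.mem_toFinset] at hT
    funext b
    by_cases h : InShape L mu b
    · simp [extnd, restr, h]
    · by_cases h' : InShape (L + 1) lam b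
      · have h3 := hfib T hT.1 hT.2 b h'
        have h4 := (hT.1.2.1 b h').2
        simp only [extnd, h, h', if_true, if_false]
        have : ¬ T b ≤ L := fun h5 => h (h3.1 h5)
        omega
      · simp [extnd, h, h', hT.1.1 b h']
  · intro T hT
    rw [Set.Finite.mem_toFinset] at hT
    funext b
    by_cases h : InShape L mu b
    · simp [extnd, restr, h]
    · simp [restr, h, hT.1 b h]
  · intro T hT
    rw [Finset.mem_filter, Set.Finite.mem_toFinset] at hT
    have hsub : shapeF L mu ⊆ shapeF (L + 1) lam := by
      intro b hb
      rw [mem_shapeF] at *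
      exact hb.mono i2
    rw [← Finset.prod_sdiff hsub, ← hcard]
    congr 1
    · refine Finset.prod_eq_pow_card fun b hb => ?_
      rw [Finset.mem_sdiff, mem_shapeF, mem_shapeF] at hb
      have h3 := hfib T hT.1 hT.2 b hb.1
      have h4 := (hT.1.2.1 b hb.1).2
      have : ¬ T b ≤ L := fun h5 => hb.2 (h3.1 h5)
      congr 1
      omega
    · refine Finset.prod_congr rfl fun b hb => ?_
      rw [mem_shapeF] at hb
      simp [restr, hb]

/-- Vandermonde product. -/
noncomputable def vdm {R : Type*} [CommRing R] (x : ℕ → R) : ℕ → R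
  | 0 => 1
  | L + 1 => (∏ j : Fin L, (x L - x j)) * vdm x L

/-- Alternant with increasing exponents `e`. -/
noncomputable def altDet {R : Type*} [CommRing R] (x : ℕ → R) (L : ℕ) (e : Fin L → ℕ) : R :=
  Matrix.det (Matrix.of fun i j : Fin L => x j ^ e i)

lemma pow_sub_geom {R : Type*} [CommRing R] (x t : R) (a b : ℕ) (h : a ≤ b) :
    x ^ b - t ^ (b - a) * x ^ a = (x - t) * ∑ m ∈ Finset.Ico a b, t ^ (b - 1 - m) * x ^ m := by
  induction b, h using Nat.le_induction with
  | base => simp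
  | succ b h ih =>
    rw [Finset.sum_Ico_succ_top h, mul_add]
    have h1 : ∑ m ∈ Finset.Ico a b, t ^ (b + 1 - 1 - m) * x ^ m
        = t * ∑ m ∈ Finset.Ico a b, t ^ (b - 1 - m) * x ^ m := by
      rw [Finset.mul_sum]
      refine Finset.sum_congr rfl fun m hm => ?_
      rw [Finset.mem_Ico] at hm
      rw [show b + 1 - 1 - m = (b - 1 - m) + 1 by omega]
      ring
    rw [h1, mul_left_comm, ← ih, show b + 1 - a = (b - a) + 1 by omega]
    simp
    ring

lemma altDet_branch {R : Type*} [CommRing R] (x : ℕ → R) (L : ℕ) (e : Fin (L + 1) → ℕ)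
    (he : ∀ i : Fin L, e i.castSucc ≤ e i.succ) :
    altDet x (L + 1) e = (∏ j : Fin L, (x L - x j)) *
      ∑ m ∈ Fintype.piFinset (fun i : Fin L => Finset.Ico (e i.castSucc) (e i.succ)),
        x L ^ (e 0 + ∑ i : Fin L, (e i.succ - 1 - m i)) * altDet x L m := by
  set t := x L with ht
  let B : Matrix (Fin (L + 1)) (Fin (L + 1)) R := Matrix.of fun i j =>
    Fin.cases (x j ^ e 0) (fun i : Fin L => x j ^ e i.succ - t ^ (e i.succ - e i.castSucc) * x j ^ e i.castSucc) i
  have h1 : altDet x (L + 1) e = B.det := by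
    unfold altDet
    refine Matrix.det_eq_of_forall_row_eq_smul_add_pred
      (fun i => t ^ (e i.succ - e i.castSucc)) ?_ ?_
    · intro j; simp [B]
    · intro i j; simp [B]
  rw [h1, Matrix.det_succ_column B (Fin.last L), Fin.sum_univ_succ]
  have h2 : ∀ i : Fin L, B i.succ (Fin.last L) = 0 := by
    intro i
    simp only [B, Matrix.of_apply, Fin.cases_succ, Fin.val_last, ← ht]
    rw [← pow_add, Nat.sub_add_cancel (he i), sub_self]
  simp only [h2, mul_zero, zero_mul, Finset.sum_const_zero, add_zero]
  have h3 : B.submatrix (Fin.succAbove 0) (Fin.last L).succAbove =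
      Matrix.of fun i j : Fin L => (x j - t) *
        (∑ m ∈ Finset.Ico (e i.castSucc) (e i.succ), t ^ (e i.succ - 1 - m) • (fun j : Fin L => x j ^ m)) j := by
    ext i j
    simp only [Matrix.submatrix_apply, Fin.zero_succAbove, Fin.succAbove_last, B, Matrix.of_apply,
      Fin.cases_succ, Fin.val_castSucc]
    rw [pow_sub_geom _ _ _ _ (he i)]
    simp
  rw [h3]
  have h4 := Matrix.det_mul_row (fun j : Fin L => x j - t) (Matrix.of fun i : Fin L =>
        (∑ m ∈ Finset.Ico (e i.castSucc) (e i.succ), t ^ (e i.succ - 1 - m) • (fun j : Fin L => x j ^ m)))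
  simp only [Matrix.of_apply] at h4
  rw [h4]
  have h5 := (Matrix.detRowAlternating (n := Fin L) (R := R)).toMultilinearMap.map_sum_finset
    (fun i m => t ^ (e i.succ - 1 - m) • (fun j : Fin L => x j ^ m))
    (fun i => Finset.Ico (e i.castSucc) (e i.succ))
  have h6 : ((Matrix.of fun i : Fin L =>
        (∑ m ∈ Finset.Ico (e i.castSucc) (e i.succ), t ^ (e i.succ - 1 - m) • (fun j : Fin L => x j ^ m))) : Matrix (Fin L) (Fin L) R).det
      = ∑ m ∈ Fintype.piFinset (fun i : Fin L => Finset.Ico (e i.castSucc) (e i.succ)),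
        t ^ (∑ i : Fin L, (e i.succ - 1 - m i)) * altDet x L m := by
    refine Eq.trans h5 (Finset.sum_congr rfl fun m hm => ?_)
    rw [MultilinearMap.map_smul_univ, Finset.prod_pow_eq_pow_sum]
    rfl
  rw [h6]
  have h7 : (∏ j : Fin L, (x j - t)) = (-1) ^ L * ∏ j : Fin L, (t - x j) := by
    have : ∀ j : Fin L, x j - t = (-1) * (t - x j) := fun j => by ring
    simp_rw [this, Finset.prod_mul_distrib]
    simp
  have h8 : B 0 (Fin.last L) = t ^ e 0 := by simp [B, ← ht]
  have h9 : ((-1 : R) ^ L) * (-1) ^ L = 1 := by rw [← mul_pow]; simp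
  rw [h7, h8]
  simp only [Fin.val_zero, zero_add, Fin.val_last, pow_add, Finset.mul_sum]
  refine Finset.sum_congr rfl fun m hm => ?_
  linear_combination (t ^ e 0 * (∏ j : Fin L, (t - x j)) *
    (t ^ (∑ i : Fin L, (e i.succ - 1 - m i)) * altDet x L m)) * h9

theorem altDet_eq {R : Type*} [CommRing R] (x : ℕ → R) (L : ℕ) (lam : ℕ → ℕ)
    (hanti : ∀ i j, 1 ≤ i → i ≤ j → j ≤ L → lam j ≤ lam i) :
    altDet x L (fun i => i + lam (L - i)) = vdm x L * ssGen x L lam := by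
  induction L generalizing lam with
  | zero =>
    have h0 : (SS_finite 0 lam).toFinset = {fun _ => 0} := by
      ext T
      simp only [Set.Finite.mem_toFinset, Set.mem_ofPred_eq, Finset.mem_singleton]
      have hn : ∀ b, ¬ InShape 0 lam b := by
        rintro b ⟨h1, h2, _⟩; omega
      constructor
      · intro h; funext b; exact h.1 b (hn b)
      · rintro rfl
        exact ⟨fun _ _ => rfl, fun b hb => absurd hb (hn b), fun i j j' h => absurd h (hn _),
          fun i j j' h => absurd h (hn _)⟩
    have h1 : shapeF 0 lam = ∅ := by simp [shapeF]
    simp [altDet, vdm, ssGen, h0, h1]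
  | succ L ih =>
    rw [altDet_branch, ssGen_branch x L lam hanti _ (fun i => rfl), vdm, mul_assoc]
    · congr 1
      rw [Finset.mul_sum]
      refine Finset.sum_congr rfl fun m hm => ?_
      rw [mul_left_comm]
      congr 1
      rw [Fintype.mem_piFinset] at hm
      have hm' : ∀ k (h1 : 1 ≤ k) (h2 : k ≤ L), m ⟨L - k, by omega⟩ = (L - k) + lamOf L m k ∧
          lam (k + 1) ≤ lamOf L m k ∧ lamOf L m k ≤ lam k := by
        intro k h1 h2
        have := hm ⟨L - k, by omega⟩
        rw [Finset.mem_Ico] at this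
        simp only [Fin.val_castSucc, Fin.val_succ] at this
        rw [show L + 1 - (L - k) = k + 1 by omega, show L + 1 - (L - k + 1) = k by omega] at this
        rw [lamOf_apply L m k h1 h2]
        omega
      rw [← ih]
      · congr 1
        funext i
        have hi := i.2
        have h4 := (hm' (L - i) (by omega) (by omega)).1
        have h5 : (⟨L - (L - i), by omega⟩ : Fin L) = i := Fin.ext (by simp; omega)
        rw [h5] at h4
        omega
      · intro i j h1 h2 h3
        rcases h2.eq_or_lt with rfl | h2
        · exact le_rfl
        · exact (hm' j (by omega) h3).2.2.trans ((hanti (i + 1) j (by omega) h2 (by omega)).trans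
            (hm' i h1 (by omega)).2.1)
    · intro i
      have hi := i.2
      have := hanti (L + 1 - (i + 1)) (L + 1 - i) (by omega) (by omega) (by omega)
      simp only [Fin.val_castSucc, Fin.val_succ]
      omega

lemma ssGen_zero {R : Type*} [CommRing R] (x : ℕ → R) (L : ℕ) :
    ssGen x L (fun _ => 0) = 1 := by
  have hn : ∀ b, ¬ InShape L (fun _ => 0) b := by
    rintro b ⟨_, _, h1, h2⟩; simp only at h2; omega
  have h0 : (SS_finite L (fun _ => 0)).toFinset = {fun _ => 0} := by
    ext T
    simp only [Set.Finite.mem_toFinset, Set.mem_ofPred_eq, Finset.mem_singleton]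
    constructor
    · intro h; funext b; exact h.1 b (hn b)
    · rintro rfl
      exact ⟨fun _ _ => rfl, fun b hb => absurd hb (hn b), fun i j j' h => absurd h (hn _),
        fun i j j' h => absurd h (hn _)⟩
  have h1 : shapeF L (fun _ => 0) = ∅ := by
    ext b; simp [mem_shapeF, hn]
  simp [ssGen, h0, h1]

theorem altDet_id {R : Type*} [CommRing R] (x : ℕ → R) (L : ℕ) :
    altDet x L (fun i => i) = vdm x L := by
  have := altDet_eq x L (fun _ => 0) (by simp)
  simpa [ssGen_zero] using this

/-- Lehmer code of `f` in the window `[0,m)`. -/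
def code {n : ℕ} (f : Equiv.Perm (Fin n)) (m : ℕ) (i : Fin n) : ℕ :=
  (Finset.univ.filter fun j : Fin n => i < j ∧ (j : ℕ) < m ∧ f j < f i).card

lemma code_swap {n : ℕ} (f : Equiv.Perm (Fin n)) (m : ℕ) (a b : Fin n) (hab : (b : ℕ) = a + 1)
    (hb : (b : ℕ) < m) (hf : f a < f b) (k : Fin n) :
    code (f * Equiv.swap a b) m k =
      if k = a then code f m b + 1 else if k = b then code f m a else code f m k := by
  have hne : a ≠ b := by rintro rfl; omega
  split_ifs with h1 h2
  · subst h1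
    unfold code
    rw [← Finset.card_insert_of_notMem (a := b) (by simp)]
    congr 1
    ext j
    simp only [Finset.mem_filter, Finset.mem_univ, true_and, Finset.mem_insert,
      Equiv.Perm.mul_apply, Equiv.swap_apply_left]
    by_cases hj : j = b
    · subst hj
      have h5 : k < j := by rw [Fin.lt_def]; omega
      simp [hf, hb, h5]
    · by_cases hj' : j = k
      · subst hj'; simp [hne, (show ¬ b < j by rw [Fin.lt_def]; omega)]
      · rw [Equiv.swap_apply_of_ne_of_ne hj' hj]
        have : k < j ↔ b < j := by
          rw [Fin.lt_def, Fin.lt_def]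
          have := Fin.val_ne_of_ne hj
          omega
        rw [this]
        simp [hj]
  · subst h2
    unfold code
    congr 1
    ext j
    simp only [Finset.mem_filter, Finset.mem_univ, true_and,
      Equiv.Perm.mul_apply, Equiv.swap_apply_right]
    by_cases hj : j = k
    · subst hj
      simp [hf.le]
    · by_cases hj' : j = a
      · subst hj'; simp [(show ¬ k < j by rw [Fin.lt_def]; omega)]
      · rw [Equiv.swap_apply_of_ne_of_ne hj' hj]
        have : a < j ↔ k < j := by
          rw [Fin.lt_def, Fin.lt_def]
          have := Fin.val_ne_of_ne hj
          omega
        rw [this]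
  · unfold code
    refine Finset.card_bij' (fun j _ => Equiv.swap a b j) (fun j _ => Equiv.swap a b j) ?_ ?_ ?_ ?_
    · intro j hj
      rw [Finset.mem_filter, Equiv.Perm.mul_apply, Equiv.Perm.mul_apply,
        Equiv.swap_apply_of_ne_of_ne h1 h2] at hj
      rw [Finset.mem_filter]
      replace hj := hj.2
      refine ⟨Finset.mem_univ _, ?_⟩
      refine ⟨?_, ?_, hj.2.2⟩
      · have := Fin.val_ne_of_ne h1
        have := Fin.val_ne_of_ne h2
        have := hj.1
        rw [Equiv.swap_apply_def]
        simp only [Fin.lt_def, Fin.ext_iff] at *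
        split_ifs <;> omega
      · have := hj.2.1
        rw [Equiv.swap_apply_def]
        split_ifs <;> omega
    · intro j hj
      rw [Finset.mem_filter, Equiv.Perm.mul_apply, Equiv.Perm.mul_apply,
        Equiv.swap_apply_of_ne_of_ne h1 h2, Equiv.swap_apply_self]
      rw [Finset.mem_filter] at hj
      replace hj := hj.2
      refine ⟨Finset.mem_univ _, ?_⟩
      refine ⟨?_, ?_, hj.2.2⟩
      · have := Fin.val_ne_of_ne h1
        have := Fin.val_ne_of_ne h2
        have := hj.1
        rw [Equiv.swap_apply_def]
        simp only [Fin.lt_def, Fin.ext_iff] at *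
        split_ifs <;> omega
      · have := hj.2.1
        rw [Equiv.swap_apply_def]
        split_ifs <;> omega
    · intro j hj; simp
    · intro j hj; simp

lemma code_lt_of_gt {n : ℕ} (f : Equiv.Perm (Fin n)) (m : ℕ) (a b : Fin n) (hab : (b : ℕ) = a + 1)
    (hb : (b : ℕ) < m) (hf : f b < f a) : code f m b < code f m a := by
  unfold code
  refine Finset.card_lt_card ?_
  rw [Finset.ssubset_iff_of_subset]
  · exact ⟨b, by simp [hf, hb, (show a < b by rw [Fin.lt_def]; omega)], by simp⟩
  · intro j
    simp only [Finset.mem_filter, Finset.mem_univ, true_and, Fin.lt_def]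
    rintro ⟨h1, h2, h3⟩
    rw [Fin.lt_def] at hf
    exact ⟨by omega, h2, by omega⟩

lemma code_le_of_lt {n : ℕ} (f : Equiv.Perm (Fin n)) (m : ℕ) (a b : Fin n) (hab : (b : ℕ) = a + 1)
    (hf : f a < f b) : code f m a ≤ code f m b := by
  unfold code
  refine Finset.card_le_card ?_
  intro j
  simp only [Finset.mem_filter, Finset.mem_univ, true_and, Fin.lt_def]
  rintro ⟨h1, h2, h3⟩
  rw [Fin.lt_def] at hf
  have : j ≠ b := by rintro rfl; omega
  have := Fin.val_ne_of_ne this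
  exact ⟨by omega, h2, by omega⟩

lemma code_le {n : ℕ} (f : Equiv.Perm (Fin n)) (m : ℕ) (i : Fin n) : code f m i ≤ n :=
  (Finset.card_le_univ _).trans (by simp)

lemma code_sum_le {n : ℕ} (f : Equiv.Perm (Fin n)) (m : ℕ) : ∑ i, code f m i ≤ n * n := by
  refine (Finset.sum_le_sum fun i _ => code_le f m i).trans ?_
  simp

/-- The combinatorial step. -/
lemma code_step {n : ℕ} (f : Equiv.Perm (Fin n)) (m : ℕ) (hanti : Antitone (code f m))
    (hns : ∃ a b : Fin n, (b : ℕ) = a + 1 ∧ (b : ℕ) < m ∧ f a < f b) :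
    ∃ a b : Fin n, (b : ℕ) = a + 1 ∧ (b : ℕ) < m ∧ f a < f b ∧ code f m a = code f m b ∧
      code (f * Equiv.swap a b) m = code f m + Pi.single a 1 ∧
      Antitone (code (f * Equiv.swap a b) m) := by
  classical
  have hex : ∃ k : ℕ, ∃ a b : Fin n, (a : ℕ) = k ∧ (b : ℕ) = a + 1 ∧ (b : ℕ) < m ∧ f a < f b := by
    obtain ⟨a, b, h⟩ := hns
    exact ⟨a, a, b, rfl, h⟩
  obtain ⟨a, b, hak, hab, hb, hf⟩ := Nat.find_spec hex
  have hmin := fun k => Nat.find_min (H := hex) (m := k)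
  have heq : code f m a = code f m b :=
    le_antisymm (code_le_of_lt f m a b hab hf) (hanti (by rw [Fin.le_def]; omega))
  have hne : a ≠ b := by rintro rfl; omega
  have hcode : code (f * Equiv.swap a b) m = code f m + Pi.single a 1 := by
    funext k
    rw [code_swap f m a b hab hb hf, Pi.add_apply]
    by_cases h1 : k = a
    · subst h1; simp [heq]
    · by_cases h2 : k = b
      · subst h2; simp [hne.symm, heq]
      · simp [h1, h2]
  refine ⟨a, b, hab, hb, hf, heq, hcode, ?_⟩
  rw [hcode]
  intro i j hij
  simp only [Pi.add_apply]
  have h0 := hanti hij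
  by_cases hj : j = a
  · subst hj
    by_cases hi : i = j
    · subst hi; exact le_rfl
    · have hij' : (i : ℕ) < j := lt_of_le_of_ne hij (fun h => hi (Fin.ext h))
      have hj := j.2
      let p : Fin n := ⟨j - 1, by omega⟩
      have hp : (j : ℕ) = p + 1 := by simp [p]; omega
      have h3 : f j < f p := by
        by_contra hcon
        have : f p ≠ f j := fun h => by
          have := f.injective h
          rw [← this] at hp
          omega
        exact hmin p (by omega) ⟨p, j, rfl, hp, by omega, lt_of_le_of_ne (not_lt.1 hcon) this⟩
      have h4 := code_lt_of_gt f m p j hp (by omega) h3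
      have h5 : code f m p ≤ code f m i := hanti (by rw [Fin.le_def]; omega)
      simp [hi]
      omega
  · simp [hj]
    omega

lemma not_strictAnti {n : ℕ} (u : Equiv.Perm (Fin n))
    (h : ¬ ∃ a b : Fin n, (b : ℕ) = a + 1 ∧ (b : ℕ) < n ∧ u a < u b) : u = Fin.revPerm := by
  have hs : StrictMono (fun i => Fin.rev (u i)) := by
    cases n with
    | zero => intro a; exact a.elim0
    | succ n =>
      rw [Fin.strictMono_iff_lt_succ]
      intro i
      rw [Fin.rev_lt_rev]
      by_contra hcon
      refine h ⟨i.castSucc, i.succ, by simp, i.succ.2, lt_of_le_of_ne (not_lt.1 hcon) ?_⟩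
      intro h
      have := u.injective h
      rw [Fin.ext_iff] at this
      simp at this
  have h1 : (u.trans Fin.revPerm : Fin n → Fin n) = id := by
    have : (StrictMono.orderIsoOfSurjective _ hs (u.trans Fin.revPerm).surjective) = OrderIso.refl (Fin n) :=
      Subsingleton.elim _ _
    funext i
    have := DFunLike.congr_fun this i
    exact this
  refine Equiv.ext fun i => ?_
  have := congrFun h1 i
  simp only [Equiv.trans_apply, Fin.revPerm_apply, id] at this
  rw [Fin.revPerm_apply, ← Fin.rev_rev (u i), this]

lemma code_rev {n : ℕ} (i : Fin n) : code (Fin.revPerm : Equiv.Perm (Fin n)) n i = n - 1 - i := by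
  unfold code
  have : (Finset.univ.filter fun j : Fin n => i < j ∧ (j : ℕ) < n ∧ Fin.revPerm j < Fin.revPerm i)
    = Finset.Ioi i := by
    ext j; simp
  rw [this]
  simp

lemma sum_code_lt {n : ℕ} (f g : Equiv.Perm (Fin n)) (m : ℕ) (a : Fin n)
    (h : code g m = code f m + Pi.single a 1) : ∑ i, code g m i = ∑ i, code f m i + 1 := by
  rw [h]
  simp [Finset.sum_add_distrib]

lemma X_sub_X_ne {n : ℕ} (a b : Fin n) (hab : a ≠ b) : (X a - X b : MvPolynomial (Fin n) ℚ) ≠ 0 := by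
  intro h
  exact hab (X_injective (sub_eq_zero.1 h))

lemma rename_mono {n : ℕ} (c : Fin n → ℕ) (a b : Fin n) (h : c a = c b) :
    rename (Equiv.swap a b) (∏ i : Fin n, (X i : MvPolynomial (Fin n) ℚ) ^ c i) = ∏ i : Fin n, X i ^ c i := by
  rw [map_prod]
  simp only [map_pow, rename_X]
  refine Fintype.prod_equiv (Equiv.swap a b) _ _ fun i => ?_
  congr 1
  rw [Equiv.swap_apply_def]
  split_ifs with h1 h2
  · rw [h1, h]
  · rw [h2, h]
  · rfl

lemma prod_add_single {n : ℕ} (c : Fin n → ℕ) (a : Fin n) :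
    (∏ i : Fin n, (X i : MvPolynomial (Fin n) ℚ) ^ (c + Pi.single a 1 : Fin n → ℕ) i) = X a * ∏ i : Fin n, X i ^ c i := by
  simp only [Pi.add_apply, pow_add, Finset.prod_mul_distrib]
  rw [mul_comm]
  congr 1
  rw [Finset.prod_eq_single a]
  · simp
  · intro b _ hb; simp [hb]
  · simp

/-- The recurrence, in a convenient form. -/
def SchubRec {n : ℕ} (S : Equiv.Perm (Fin n) → MvPolynomial (Fin n) ℚ) : Prop :=
  ∀ (u : Equiv.Perm (Fin n)) (a b : Fin n), (b : ℕ) = a + 1 → u a < u b →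
    (X a - X b) * S u = S (u * Equiv.swap a b) - rename (Equiv.swap a b) (S (u * Equiv.swap a b))

theorem schub_dominant {n : ℕ} (S : Equiv.Perm (Fin n) → MvPolynomial (Fin n) ℚ)
    (hlong : S Fin.revPerm = ∏ i : Fin n, X i ^ (n - 1 - (i : ℕ)))
    (hrec : SchubRec S) (N : ℕ) (u : Equiv.Perm (Fin n)) (hN : n * n - ∑ i, code u n i = N)
    (hu : Antitone (code u n)) : S u = ∏ i, X i ^ code u n i := by
  induction N generalizing u with
  | zero =>
    by_cases h : ∃ a b : Fin n, (b : ℕ) = a + 1 ∧ (b : ℕ) < n ∧ u a < u b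
    · obtain ⟨a, b, hab, hb, hf, heq, hc, ha⟩ := code_step u n hu h
      have := sum_code_lt _ _ _ _ hc
      have := code_sum_le (u * Equiv.swap a b) n
      omega
    · rw [not_strictAnti u h, hlong]
      simp [code_rev]
  | succ N ih =>
    by_cases h : ∃ a b : Fin n, (b : ℕ) = a + 1 ∧ (b : ℕ) < n ∧ u a < u b
    · obtain ⟨a, b, hab, hb, hf, heq, hc, ha⟩ := code_step u n hu h
      have h1 := sum_code_lt _ _ _ _ hc
      have h2 := ih (u * Equiv.swap a b) (by omega) ha
      have h3 := hrec u a b hab hf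
      have hne : a ≠ b := by rintro rfl; omega
      rw [h2, hc, prod_add_single, map_mul, rename_mono _ _ _ heq, rename_X,
        Equiv.swap_apply_left, ← sub_mul] at h3
      exact mul_left_cancel₀ (X_sub_X_ne a b hne) h3
    · rw [not_strictAnti u h, hlong]
      simp [code_rev]

lemma schub_symm {n : ℕ} {S : Equiv.Perm (Fin n) → MvPolynomial (Fin n) ℚ}
    (hrec : SchubRec S) (u : Equiv.Perm (Fin n)) (a b : Fin n) (hab : (b : ℕ) = a + 1)
    (hu : u a < u b) : rename (Equiv.swap a b) (S u) = S u := by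
  have hne : a ≠ b := by rintro rfl; omega
  have h := hrec u a b hab hu
  have h2 := congrArg (rename (Equiv.swap a b)) h
  rw [map_mul, map_sub, map_sub, rename_X, rename_X, rename_rename, Equiv.swap_apply_left,
    Equiv.swap_apply_right] at h2
  have h3 : (⇑(Equiv.swap a b) ∘ ⇑(Equiv.swap a b)) = id := by
    funext i; simp
  rw [h3, rename_id_apply] at h2
  refine mul_left_cancel₀ (X_sub_X_ne a b hne) ?_
  linear_combination -h - h2

/-- Embedding of `S_L` in `S_n`. -/
noncomputable def phi {n L : ℕ} (hL : L ≤ n) : Equiv.Perm (Fin L) →* Equiv.Perm (Fin n) :=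
  Equiv.Perm.viaEmbeddingHom (Fin.castLEEmb hL)

lemma phi_apply {n L : ℕ} (hL : L ≤ n) (σ : Equiv.Perm (Fin L)) (i : Fin L) :
    phi hL σ (Fin.castLE hL i) = Fin.castLE hL (σ i) :=
  Equiv.Perm.viaEmbedding_apply σ (Fin.castLEEmb hL) i

lemma phi_apply_ge {n L : ℕ} (hL : L ≤ n) (σ : Equiv.Perm (Fin L)) (i : Fin n) (hi : L ≤ (i : ℕ)) :
    phi hL σ i = i := by
  refine Equiv.Perm.viaEmbedding_apply_of_notMem σ (Fin.castLEEmb hL) i ?_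
  rintro ⟨j, rfl⟩
  simp at hi
  omega

lemma phi_swap {n L : ℕ} (hL : L ≤ n) (a b : Fin L) :
    phi hL (Equiv.swap a b) = Equiv.swap (Fin.castLE hL a) (Fin.castLE hL b) := by
  refine Equiv.ext fun i => ?_
  by_cases hi : (i : ℕ) < L
  · obtain ⟨j, rfl⟩ : ∃ j : Fin L, Fin.castLE hL j = i := ⟨⟨i, hi⟩, by ext; simp⟩
    rw [phi_apply, Equiv.swap_apply_def, Equiv.swap_apply_def]
    simp only [Fin.castLE_inj]
    split_ifs <;> rfl
  · rw [phi_apply_ge hL _ _ (by omega), Equiv.swap_apply_of_ne_of_ne]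
    · rintro rfl; simp at hi
    · rintro rfl; simp at hi

/-- Antisymmetrization over `S_L`. -/
noncomputable def Alt {n L : ℕ} (hL : L ≤ n) (p : MvPolynomial (Fin n) ℚ) : MvPolynomial (Fin n) ℚ :=
  ∑ σ : Equiv.Perm (Fin L), ((Equiv.Perm.sign σ : ℤ) : MvPolynomial (Fin n) ℚ) * rename (phi hL σ) p

lemma alt_swap {n L : ℕ} (hL : L ≤ n) (a b : Fin L) (hab : a ≠ b) (p : MvPolynomial (Fin n) ℚ) :
    Alt hL (rename (Equiv.swap (Fin.castLE hL a) (Fin.castLE hL b)) p) = - Alt hL p := by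
  unfold Alt
  rw [← Finset.sum_neg_distrib]
  refine Fintype.sum_equiv (Equiv.mulRight (Equiv.swap a b)) _ _ fun σ => ?_
  rw [Equiv.coe_mulRight, map_mul, map_mul, phi_swap, rename_rename, Equiv.Perm.sign_swap hab]
  simp [Equiv.Perm.coe_mul]

lemma alt_sub {n L : ℕ} (hL : L ≤ n) (p q : MvPolynomial (Fin n) ℚ) :
    Alt hL (p - q) = Alt hL p - Alt hL q := by
  simp [Alt, mul_sub]

lemma alt_step {n L : ℕ} (hL : L ≤ n) (a b : Fin L) (hab : a ≠ b)
    (h g F : MvPolynomial (Fin n) ℚ)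
    (hh : rename (Equiv.swap (Fin.castLE hL a) (Fin.castLE hL b)) h = h)
    (hg : rename (Equiv.swap (Fin.castLE hL a) (Fin.castLE hL b)) g = g)
    (hF : (X (Fin.castLE hL a) - X (Fin.castLE hL b)) * g =
      F - rename (Equiv.swap (Fin.castLE hL a) (Fin.castLE hL b)) F) :
    Alt hL (X (Fin.castLE hL a) * h * g) = Alt hL (h * F) := by
  have h1 := alt_swap hL a b hab (h * F)
  have h2 := alt_swap hL a b hab (X (Fin.castLE hL a) * h * g)
  rw [map_mul, hh] at h1
  rw [map_mul, map_mul, rename_X, hh, hg, Equiv.swap_apply_left] at h2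
  have h3 : X (Fin.castLE hL a) * h * g - X (Fin.castLE hL b) * h * g =
      h * F - h * rename (Equiv.swap (Fin.castLE hL a) (Fin.castLE hL b)) F := by
    linear_combination h * hF
  have h4 := congrArg (Alt hL) h3
  rw [alt_sub, alt_sub, h1, h2] at h4
  have h5 : (2 : MvPolynomial (Fin n) ℚ) * Alt hL (X (Fin.castLE hL a) * h * g) =
      2 * Alt hL (h * F) := by linear_combination h4
  exact mul_left_cancel₀ two_ne_zero h5

lemma alt_mul_symm {n L : ℕ} (hL : L ≤ n) (p g : MvPolynomial (Fin n) ℚ)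
    (hg : ∀ σ, rename (phi hL σ) g = g) : Alt hL (p * g) = g * Alt hL p := by
  unfold Alt
  rw [Finset.mul_sum]
  refine Finset.sum_congr rfl fun σ _ => ?_
  rw [map_mul, hg]
  ring

lemma symm_all {n L : ℕ} (hL : L ≤ n) (g : MvPolynomial (Fin n) ℚ)
    (hg : ∀ a b : Fin L, (b : ℕ) = a + 1 →
      rename (Equiv.swap (Fin.castLE hL a) (Fin.castLE hL b)) g = g) (σ : Equiv.Perm (Fin L)) :
    rename (phi hL σ) g = g := by
  cases L with
  | zero =>
    have : σ = 1 := Subsingleton.elim _ _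
    rw [this, map_one]
    exact rename_id_apply g
  | succ L =>
    have hσ : σ ∈ Submonoid.closure
        (Set.range fun i : Fin L ↦ Equiv.swap i.castSucc i.succ) := by
      rw [Equiv.Perm.mclosure_swap_castSucc_succ]; trivial
    induction hσ using Submonoid.closure_induction with
    | mem x hx =>
      obtain ⟨i, rfl⟩ := hx
      simp only [phi_swap]
      exact hg _ _ (by simp)
    | one => rw [map_one]; exact rename_id_apply g
    | mul x y _ _ hx hy =>
      rw [map_mul, Equiv.Perm.coe_mul, ← rename_rename, hy, hx]

/-- the exponent of the `k`-th variable -/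
noncomputable def dvec (n k : ℕ) : Fin n →₀ ℕ :=
  if h : k < n then Finsupp.single ⟨k, h⟩ 1 else 0

/-- the variables, indexed by natural numbers -/
noncomputable def xvar (n k : ℕ) : MvPolynomial (Fin n) ℚ := monomial (dvec n k) 1

lemma xvar_eq {n : ℕ} (i : Fin n) : xvar n i = X i := by
  simp [xvar, dvec, X]

lemma vdm_ne_zero {n : ℕ} (L : ℕ) (hL : L ≤ n) : vdm (xvar n) L ≠ 0 := by
  induction L with
  | zero => simp [vdm]
  | succ L ih =>
    rw [vdm]
    refine mul_ne_zero ?_ (ih (by omega))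
    rw [Finset.prod_ne_zero_iff]
    intro j _
    have hj := j.2
    have := X_sub_X_ne (⟨L, by omega⟩ : Fin n) ⟨j, by omega⟩ (by simp [Fin.ext_iff]; omega)
    rw [← xvar_eq, ← xvar_eq] at this
    exact this

lemma alt_monomial {n L : ℕ} (hL : L ≤ n) (c : Fin n → ℕ) (hc : ∀ i : Fin n, L ≤ (i : ℕ) → c i = 0) :
    Alt hL (∏ i, X i ^ c i) = altDet (xvar n) L (fun i => c (Fin.castLE hL i)) := by
  have h1 : (∏ i : Fin n, (X i : MvPolynomial (Fin n) ℚ) ^ c i) =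
      ∏ i : Fin L, X (Fin.castLE hL i) ^ c (Fin.castLE hL i) := by
    refine Eq.trans ?_ (Finset.prod_map Finset.univ (Fin.castLEEmb hL)
      (fun i => (X i : MvPolynomial (Fin n) ℚ) ^ c i))
    symm
    refine Finset.prod_subset (Finset.subset_univ _) ?_
    intro i _ hi
    rw [hc i, pow_zero]
    by_contra hlt
    exact hi (Finset.mem_map.2 ⟨⟨i, by omega⟩, Finset.mem_univ _, by ext; simp⟩)
  rw [h1]
  unfold Alt altDet
  rw [← Matrix.det_transpose, Matrix.det_apply']
  refine Finset.sum_congr rfl fun σ _ => ?_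
  congr 1
  rw [map_prod]
  refine Finset.prod_congr rfl fun i _ => ?_
  rw [map_pow, rename_X, phi_apply, Matrix.transpose_apply, Matrix.of_apply, ← xvar_eq]
  simp

lemma altDet_rev {R : Type*} [CommRing R] (x : ℕ → R) (L : ℕ) (e : Fin L → ℕ) :
    altDet x L (fun i => e (Fin.rev i)) =
      ((Equiv.Perm.sign (Fin.revPerm : Equiv.Perm (Fin L)) : ℤ) : R) * altDet x L e := by
  unfold altDet
  rw [← Matrix.det_permute]
  rfl

lemma alt_chain {n L : ℕ} (hL : L ≤ n) (S : Equiv.Perm (Fin n) → MvPolynomial (Fin n) ℚ)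
    (hrec : SchubRec S) (w : Equiv.Perm (Fin n))
    (hmono : StrictMono fun i : Fin L => w (Fin.castLE hL i))
    (N : ℕ) (τ : Equiv.Perm (Fin L))
    (hN : n * n - ∑ i, code (Fin.revPerm * (w * phi hL τ)) L i = N)
    (hu : Antitone (code (Fin.revPerm * (w * phi hL τ)) L)) :
    Alt hL ((∏ i, X i ^ code (Fin.revPerm * (w * phi hL τ)) L i) * S (w * phi hL τ)) =
      Alt hL ((∏ i, X i ^ code (Fin.revPerm * w) L i) * S w) := by
  induction N using Nat.strong_induction_on generalizing τ with
  | _ N ih =>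
    by_cases h : ∃ a b : Fin n, (b : ℕ) = a + 1 ∧ (b : ℕ) < L ∧
        (Fin.revPerm * (w * phi hL τ) : Equiv.Perm (Fin n)) a <
          (Fin.revPerm * (w * phi hL τ) : Equiv.Perm (Fin n)) b
    · obtain ⟨a, b, hab, hb, hf, heq, hc, ha⟩ := code_step _ L hu h
      obtain ⟨a', rfl⟩ : ∃ a' : Fin L, Fin.castLE hL a' = a := ⟨⟨a, by omega⟩, by ext; simp⟩
      obtain ⟨b', rfl⟩ : ∃ b' : Fin L, Fin.castLE hL b' = b := ⟨⟨b, by omega⟩, by ext; simp⟩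
      have hne : a' ≠ b' := by rintro rfl; omega
      have hmul : w * phi hL (τ * Equiv.swap a' b') =
          w * phi hL τ * Equiv.swap (Fin.castLE hL a') (Fin.castLE hL b') := by
        rw [map_mul, phi_swap, mul_assoc]
      have h1 := sum_code_lt _ _ _ _ hc
      have h2 := code_sum_le (Fin.revPerm * (w * phi hL τ) *
        Equiv.swap (Fin.castLE hL a') (Fin.castLE hL b')) L
      rw [mul_assoc Fin.revPerm] at h1 h2 ha hc
      have h3 := ih (N - 1) (by omega) (τ * Equiv.swap a' b') (by rw [hmul]; omega)
        (by rw [hmul]; exact ha)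
      rw [← h3, hmul, hc, prod_add_single]
      rw [Equiv.Perm.mul_apply, Equiv.Perm.mul_apply Fin.revPerm, Fin.revPerm_apply,
        Fin.revPerm_apply, Fin.rev_lt_rev] at hf
      have hlt : (w * phi hL τ * Equiv.swap (Fin.castLE hL a') (Fin.castLE hL b')) (Fin.castLE hL a')
          < (w * phi hL τ * Equiv.swap (Fin.castLE hL a') (Fin.castLE hL b')) (Fin.castLE hL b') := by
        rw [Equiv.Perm.mul_apply _ (Equiv.swap _ _), Equiv.Perm.mul_apply _ (Equiv.swap _ _),
          Equiv.swap_apply_left, Equiv.swap_apply_right]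
        exact hf
      symm
      refine alt_step hL a' b' hne _ _ _ (rename_mono _ _ _ heq) (schub_symm hrec _ _ _ hab hlt) ?_
      have h5 := hrec _ _ _ hab hlt
      rw [mul_assoc (w * phi hL τ), Equiv.swap_mul_self, mul_one] at h5
      exact h5
    · have hτ : StrictMono τ := by
        have h6 : StrictMono fun i : Fin L => w (Fin.castLE hL (τ i)) := by
          cases L with
          | zero => intro a; exact a.elim0
          | succ L =>
            rw [Fin.strictMono_iff_lt_succ]
            intro i
            by_contra hcon
            refine h ⟨Fin.castLE hL i.castSucc, Fin.castLE hL i.succ, by simp, by simp, ?_⟩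
            simp only [Equiv.Perm.mul_apply, Fin.revPerm_apply, Fin.rev_lt_rev, phi_apply]
            refine lt_of_le_of_ne (not_lt.1 hcon) ?_
            intro h
            have := τ.injective (Fin.castLE_injective hL (w.injective h))
            rw [Fin.ext_iff] at this
            simp at this
        intro i j hij
        exact hmono.lt_iff_lt.1 (h6 hij)
      have : τ = 1 := by
        have h7 : (StrictMono.orderIsoOfSurjective _ hτ τ.surjective) = OrderIso.refl (Fin L) :=
          Subsingleton.elim _ _
        refine Equiv.ext fun i => ?_
        exact DFunLike.congr_fun h7 i
      subst this
      simp

lemma code_top {n L : ℕ} (hL : L ≤ n) (w : Equiv.Perm (Fin n))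
    (hmono : StrictMono fun i : Fin L => w (Fin.castLE hL i)) (i : Fin n) :
    code (Fin.revPerm * w) L i = L - 1 - i := by
  unfold code
  rw [← Finset.card_map Fin.valEmbedding]
  have : (Finset.map Fin.valEmbedding (Finset.univ.filter fun j : Fin n => i < j ∧ (j : ℕ) < L ∧
      (Fin.revPerm * w : Equiv.Perm (Fin n)) j < (Fin.revPerm * w : Equiv.Perm (Fin n)) i)) = Finset.Ioo (i : ℕ) L := by
    ext k
    rw [Finset.mem_map, Finset.mem_Ioo]
    constructor
    · rintro ⟨j, hj, rfl⟩
      rw [Finset.mem_filter] at hj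
      exact ⟨hj.2.1, hj.2.2.1⟩
    · rintro ⟨h1, h2⟩
      refine ⟨⟨k, by omega⟩, ?_, rfl⟩
      rw [Finset.mem_filter]
      refine ⟨Finset.mem_univ _, h1, h2, ?_⟩
      rw [Equiv.Perm.mul_apply, Equiv.Perm.mul_apply, Fin.revPerm_apply, Fin.revPerm_apply,
        Fin.rev_lt_rev]
      exact @hmono ⟨i, by omega⟩ ⟨k, h2⟩ h1
  rw [this]
  simp
  omega

theorem schub_eq {n L : ℕ} (hL : L ≤ n) (lam : ℕ → ℕ)
    (S : Equiv.Perm (Fin n) → MvPolynomial (Fin n) ℚ)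
    (hlong : S Fin.revPerm = ∏ i : Fin n, X i ^ (n - 1 - (i : ℕ)))
    (hrec : SchubRec S)
    (hanti : ∀ i j, 1 ≤ i → i ≤ j → j ≤ L → lam j ≤ lam i)
    (w : Equiv.Perm (Fin n))
    (hw : ∀ i : Fin n, (i : ℕ) + 1 ≤ L → ((w i : ℕ) + 1 = (i : ℕ) + 1 + lam (L - (i : ℕ))))
    (hgrass : ∀ i j : Fin n, L ≤ (i : ℕ) → i < j → w i < w j) :
    S w = ssGen (xvar n) L lam := by
  have hw' : ∀ i : Fin L, (w (Fin.castLE hL i) : ℕ) = i + lam (L - i) := by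
    intro i
    have := hw (Fin.castLE hL i) (by simp)
    simp at this
    omega
  have hmono : StrictMono fun i : Fin L => w (Fin.castLE hL i) := by
    intro i j hij
    rw [Fin.lt_def] at hij
    simp only [Fin.lt_def, hw']
    have := hanti (L - j) (L - i) (by omega) (by omega) (by omega)
    omega
  set v := w * phi hL Fin.revPerm with hv
  have hv1 : ∀ i : Fin L, v (Fin.castLE hL i) = w (Fin.castLE hL (Fin.rev i)) := by
    intro i
    rw [hv, Equiv.Perm.mul_apply, phi_apply, Fin.revPerm_apply]
  have hv2 : ∀ i : Fin n, L ≤ (i : ℕ) → v i = w i := by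
    intro i hi
    rw [hv, Equiv.Perm.mul_apply, phi_apply_ge hL _ _ hi]
  have hv3 : ∀ i j : Fin n, i < j → (j : ℕ) < L → v j < v i := by
    intro i j hij hj
    rw [Fin.lt_def] at hij
    have h1 := hv1 ⟨i, by omega⟩
    have h2 := hv1 ⟨j, hj⟩
    have e1 : Fin.castLE hL ⟨i, by omega⟩ = i := by ext; simp
    have e2 : Fin.castLE hL ⟨j, hj⟩ = j := by ext; simp
    rw [e1] at h1
    rw [e2] at h2
    rw [h1, h2]
    apply hmono
    rw [Fin.rev_lt_rev, Fin.lt_def]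
    exact hij
  have hc0 : code (Fin.revPerm * v) L = 0 := by
    funext i
    unfold code
    rw [Pi.zero_apply, Finset.card_eq_zero, Finset.filter_eq_empty_iff]
    rintro j _ ⟨h1, h2, h3⟩
    replace h3 : Fin.rev (v j) < Fin.rev (v i) := h3
    rw [Fin.rev_lt_rev] at h3
    exact absurd (hv3 i j h1 h2) (not_lt.2 h3.le)
  have hcv1 : ∀ i : Fin n, L ≤ (i : ℕ) → code v n i = 0 := by
    intro i hi
    unfold code
    rw [Finset.card_eq_zero, Finset.filter_eq_empty_iff]
    rintro j _ ⟨h1, h2, h3⟩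
    have h1' := h1
    rw [Fin.lt_def] at h1'
    rw [hv2 i hi, hv2 j (by omega)] at h3
    exact absurd (hgrass i j hi h1) (not_lt.2 h3.le)
  have hcv2 : ∀ i : Fin n, (i : ℕ) < L → code v n i = v i := by
    intro i hi
    unfold code
    have : (Finset.univ.filter fun j : Fin n => i < j ∧ (j : ℕ) < n ∧ v j < v i) =
        (Finset.Iio (v i)).map v.symm.toEmbedding := by
      ext j
      rw [Finset.mem_filter, Finset.mem_map_equiv, Equiv.symm_symm, Finset.mem_Iio]
      constructor
      · exact fun h => h.2.2.2
      · intro h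
        refine ⟨Finset.mem_univ _, ?_, j.2, h⟩
        by_contra hcon
        rcases (not_lt.1 hcon).eq_or_lt with rfl | h4
        · exact lt_irrefl _ h
        · exact absurd (hv3 j i h4 hi) (not_lt.2 h.le)
    rw [this, Finset.card_map, Fin.card_Iio]
  have hcanti : Antitone (code v n) := by
    intro i j hij
    by_cases hj : (j : ℕ) < L
    · rcases hij.eq_or_lt with rfl | hij
      · exact le_rfl
      · have hij' := hij
        rw [Fin.lt_def] at hij'
        rw [hcv2 j hj, hcv2 i (by omega)]
        exact (hv3 i j hij hj).le
    · rw [hcv1 j (by omega)]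
      exact Nat.zero_le _
  have hSv := schub_dominant S hlong hrec _ v rfl hcanti
  have hchain := alt_chain hL S hrec w hmono _ Fin.revPerm rfl
    (by rw [← hv, hc0]; exact antitone_const)
  rw [← hv, hc0, hSv] at hchain
  simp only [Pi.zero_apply, pow_zero, Finset.prod_const_one, one_mul] at hchain
  rw [alt_monomial hL _ hcv1, alt_mul_symm, alt_monomial] at hchain
  · simp only [code_top hL w hmono, Fin.val_castLE] at hchain
    have e1 : (fun i : Fin L => code v n (Fin.castLE hL i)) =
        fun i => (fun i : Fin L => (i : ℕ) + lam (L - i)) (Fin.rev i) := by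
      funext i
      rw [hcv2 _ (by simp), hv1, hw']
    have e2 : (fun i : Fin L => L - 1 - (i : ℕ)) =
        fun i => (fun i : Fin L => (i : ℕ)) (Fin.rev i) := by
      funext i
      simp [Fin.val_rev]
      omega
    rw [e1, e2, altDet_rev _ _ (fun i : Fin L => (i : ℕ) + lam (L - i)),
      altDet_rev _ _ (fun i : Fin L => (i : ℕ)), altDet_id, altDet_eq _ _ _ hanti] at hchain
    have hs : (((Equiv.Perm.sign (Fin.revPerm : Equiv.Perm (Fin L)) : ℤ)) :
        MvPolynomial (Fin n) ℚ) ≠ 0 := by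
      rcases Int.units_eq_one_or (Equiv.Perm.sign (Fin.revPerm : Equiv.Perm (Fin L))) with h | h <;>
        simp [h]
    refine mul_left_cancel₀ (mul_ne_zero hs (vdm_ne_zero L hL)) ?_
    linear_combination -hchain
  · intro i hi
    rw [code_top hL w hmono]
    omega
  · refine symm_all hL _ fun a b hab => schub_symm hrec _ _ _ (by simpa using hab) ?_
    apply hmono
    rw [Fin.lt_def]
    omega

/-- content exponent of a tableau -/
noncomputable def content (n L : ℕ) (lam : ℕ → ℕ) (T : ℕ × ℕ → ℕ) : Fin n →₀ ℕ :=
  ∑ b ∈ shapeF L lam, dvec n (T b - 1)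

lemma content_apply {n L : ℕ} {lam : ℕ → ℕ} {T : ℕ × ℕ → ℕ} (hT : SS L lam T) (k : Fin n) :
    content n L lam T k = {b | InShape L lam b ∧ T b = (k : ℕ) + 1}.ncard := by
  have h1 : {b | InShape L lam b ∧ T b = (k : ℕ) + 1} =
      ((shapeF L lam).filter fun b => T b = (k : ℕ) + 1 : Finset (ℕ × ℕ)) := by
    ext b
    simp [mem_shapeF]
  rw [h1, Set.ncard_coe_finset, Finset.card_filter, content, Finsupp.finsetSum_apply]
  refine Finset.sum_congr rfl fun b hb => ?_
  have := hT.2.1 b ((mem_shapeF _ _ _).1 hb)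
  unfold dvec
  split_ifs with h2 h3 h3
  · rw [Finsupp.single_apply, if_pos]
    ext; simp; omega
  · rw [Finsupp.single_apply, if_neg]
    rw [Fin.ext_iff]; simp; omega
  · have := k.2
    omega
  · rfl

lemma coeff_ssGen (n L : ℕ) (lam : ℕ → ℕ) (α : Fin n → ℕ) :
    coeff (Finsupp.equivFunOnFinite.symm α) (ssGen (xvar n) L lam) =
      ({T : ℕ × ℕ → ℕ | IsSSYT n L lam α T}.ncard : ℚ) := by
  classical
  have h1 : {T : ℕ × ℕ → ℕ | IsSSYT n L lam α T} = ((SS_finite L lam).toFinset.filter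
      fun T => content n L lam T = Finsupp.equivFunOnFinite.symm α : Finset (ℕ × ℕ → ℕ)) := by
    ext T
    rw [Finset.mem_coe, Finset.mem_filter, Set.Finite.mem_toFinset]
    constructor
    · rintro ⟨a1, a2, a3, a4, a5⟩
      have hT : SS L lam T := ⟨a1, a2, a3, a4⟩
      refine ⟨hT, ?_⟩
      ext k
      rw [content_apply hT, a5]
      rfl
    · rintro ⟨hT, h⟩
      refine ⟨hT.1, hT.2.1, hT.2.2.1, hT.2.2.2, fun k => ?_⟩
      rw [← content_apply hT, h]
      rfl
  rw [h1, Set.ncard_coe_finset, Finset.card_filter, ssGen, coeff_sum]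
  push_cast
  refine Finset.sum_congr rfl fun T _ => ?_
  have : ∏ b ∈ shapeF L lam, xvar n (T b - 1) = monomial (content n L lam T) 1 := by
    unfold xvar content
    rw [monomial_sum_one]
  rw [this, coeff_monomial]

/-- Let `S` be the family of Schubert polynomials of `S_n` (characterized by
`S w₀ = x₀^{n-1} x₁^{n-2} ⋯` for the longest element and the divided-difference
recurrence `(x_i - x_{i+1}) · S w = S (w s_i) - s_i (S (w s_i))` when `w i < w (i+1)`).
Let `w = w_λ` be the grassmannian permutation of the partition `λ₁ ≥ ⋯ ≥ λ_L`
(in 1-based terms `w_λ(i) = i + λ_{L-i+1}` for `i ≤ L`, with at most one descent,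
at `L`).  Then the coefficient of `x^α` in `S w_λ` equals the Kostka number
`K_{λ,α}`, the number of semistandard Young tableaux of shape `λ` and content `α`. -/
theorem coeff_schubert_grassmannian_eq_kostka (n L : ℕ) (lam : ℕ → ℕ)
    (S : Equiv.Perm (Fin n) → MvPolynomial (Fin n) ℚ)
    (hlong : S Fin.revPerm = ∏ i : Fin n, X i ^ (n - 1 - (i : ℕ)))
    (hrec : ∀ (w : Equiv.Perm (Fin n)) (i : ℕ) (h : i + 1 < n),
      w ⟨i, by omega⟩ < w ⟨i + 1, h⟩ →
        (X (⟨i, by omega⟩ : Fin n) - X ⟨i + 1, h⟩) * S w =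
          S (w * Equiv.swap ⟨i, by omega⟩ ⟨i + 1, h⟩) -
            rename (Equiv.swap (⟨i, by omega⟩ : Fin n) ⟨i + 1, h⟩)
              (S (w * Equiv.swap ⟨i, by omega⟩ ⟨i + 1, h⟩)))
    (hL : L ≤ n)
    (hanti : ∀ i j, 1 ≤ i → i ≤ j → j ≤ L → lam j ≤ lam i)
    (w : Equiv.Perm (Fin n))
    (hw : ∀ i : Fin n, (i : ℕ) + 1 ≤ L → ((w i : ℕ) + 1 = (i : ℕ) + 1 + lam (L - (i : ℕ))))
    (hgrass : ∀ i j : Fin n, L ≤ (i : ℕ) → i < j → w i < w j)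
    (α : Fin n → ℕ) :
    coeff (Finsupp.equivFunOnFinite.symm α) (S w) =
      ({T : ℕ × ℕ → ℕ | IsSSYT n L lam α T}.ncard : ℚ) := by
  have hrec' : SchubRec S := by
    intro u a b hab hu
    obtain ⟨a, ha⟩ := a
    obtain ⟨b, hb⟩ := b
    simp only at hab
    subst hab
    exact hrec u a hb hu
  rw [schub_eq hL lam S hlong hrec' hanti w hw hgrass]
  exact coeff_ssGen n L lam α

end Schub
end
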